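/- Suppose f : 𝕊 → ℝ is Lipschitz continuous and μ is an arbitrary absolutely continuous probability measure on 𝕊. Then the function t ↦ μ̂ₜ(f) is continuous on [0,1], and the laws 𝐏ⁿ_μ of the random paths t ↦ ζₙ(x,t) on C⁰([0,1],ℝ) converge weakly, as n → ∞, to the point mass (Dirac measure) at the path ζ ∈ C⁰([0,1],ℝ) given by ζ(t) = ∫₀ᵗ μ̂ₛ(f) ds. In particular the limit is independent of μ. -/

import Mathlib

open MeasureTheory Filter Topology Set UniformConvergence

noncomputable section

instance : Fact ((0:ℝ) < 1) := ⟨zero_lt_one⟩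

/-- The circle `𝕊 = ℝ/ℤ`. -/
abbrev Circle1 : Type := AddCircle (1 : ℝ)

/-- A `C²` expanding circle map with expansion `≥ lam` and `‖T''‖_∞ ≤ Astar`,
encoded by a lift `F : ℝ → ℝ` satisfying `F (x+1) = F x + deg`. -/
structure CM (lam Astar : ℝ) where
  F : ℝ → ℝ
  deg : ℤ
  lift_add_one : ∀ x : ℝ, F (x + 1) = F x + deg
  contDiff : ContDiff ℝ 2 F
  expanding : ∀ x : ℝ, lam ≤ deriv F x
  second_bound : ∀ x : ℝ, |deriv (deriv F) x| ≤ Astar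

namespace CM

variable {lam Astar : ℝ}

/-- The induced map on the circle. -/
def toMap (T : CM lam Astar) : Circle1 → Circle1 :=
  fun x => (↑(T.F ((AddCircle.equivIco 1 0 x : ℝ))) : Circle1)

/-- The derivative of `T`, as a function on the circle. -/
def dmap (T : CM lam Astar) : Circle1 → ℝ :=
  fun x => deriv T.F ((AddCircle.equivIco 1 0 x : ℝ))

end CM

/-- The `C¹` distance on the space of maps. -/
def dC1 {lam Astar : ℝ} (T₁ T₂ : CM lam Astar) : ℝ :=
  (⨆ x : Circle1, dist (T₁.toMap x) (T₂.toMap x)) + (⨆ x : Circle1, |T₁.dmap x - T₂.dmap x|)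

/-- The transfer operator `ℒ_T h (x) = ∑_{T y = x} h y / T' y`. -/
def transfer {lam Astar : ℝ} (T : CM lam Astar) (h : Circle1 → ℝ) : Circle1 → ℝ :=
  fun x => ∑' y : {y : Circle1 // T.toMap y = x}, h y / T.dmap y

/-- Iterated transfer operators `ℒ_k ⋯ ℒ_1` of the sequence `T_1, T_2, …` (`Ts i = T_i`). -/
def transferIter {lam Astar : ℝ} (Ts : ℕ → CM lam Astar) : ℕ → (Circle1 → ℝ) → (Circle1 → ℝ)
  | 0, h => h
  | (k+1), h => transfer (Ts (k+1)) (transferIter Ts k h)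

/-- Composition `T_k ∘ ⋯ ∘ T_1` as circle maps. -/
def mapIter {lam Astar : ℝ} (Ts : ℕ → CM lam Astar) : ℕ → Circle1 → Circle1
  | 0 => id
  | (k+1) => (Ts (k+1)).toMap ∘ mapIter Ts k

/-- Composition of the lifts `F_k ∘ ⋯ ∘ F_1`. -/
def liftIter {lam Astar : ℝ} (Ts : ℕ → CM lam Astar) : ℕ → ℝ → ℝ
  | 0 => id
  | (k+1) => (Ts (k+1)).F ∘ liftIter Ts k

/-- A real representative of `z`. -/
def zrep (z : Circle1) : ℝ := (AddCircle.equivIco 1 0 z : ℝ)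

/-- The coordinate on the cut circle `J_z = 𝕊 ∖ {z}`. -/
def arcCoord (z x : Circle1) : ℝ := ((AddCircle.equivIoc 1 (zrep z) x : ℝ))

/-- `|x − y|_z`: the length of the subarc of `J_z` connecting `x` and `y`. -/
def arcDist (z x y : Circle1) : ℝ := |arcCoord z x - arcCoord z y|

/-- `g` is Lipschitz on `J_z = 𝕊 ∖ {z}` with constant `L`. -/
def LipOnArc (z : Circle1) (L : ℝ) (g : Circle1 → ℝ) : Prop :=
  ∀ x y : Circle1, x ≠ z → y ≠ z → |g x - g y| ≤ L * arcDist z x y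

/-- A probability density w.r.t. the Haar–Lebesgue measure `𝔪` on the circle. -/
def IsProbDensity (ψ : Circle1 → ℝ) : Prop :=
  Integrable ψ volume ∧ (∫ x : Circle1, ψ x) = 1 ∧ ∀ x, 0 ≤ ψ x

/-- The class `𝒟_L`: positive probability densities whose logarithm is Lipschitz
with constant `L` on `J_z` for some `z`. -/
def memD (L : ℝ) (ψ : Circle1 → ℝ) : Prop :=
  IsProbDensity ψ ∧ (∀ x, 0 < ψ x) ∧ ∃ z : Circle1, LipOnArc z L (fun x => Real.log (ψ x))

/-- The `L¹(𝔪)` norm. -/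
def l1norm (h : Circle1 → ℝ) : ℝ := ∫ x : Circle1, |h x|

/-- The supremum norm. -/
def supNorm (h : Circle1 → ℝ) : ℝ := ⨆ x : Circle1, |h x|

/-- The Lipschitz constant of `h` (w.r.t. the metric of the circle). -/
def lipConst (h : Circle1 → ℝ) : ℝ :=
  sInf {L : ℝ | 0 ≤ L ∧ ∀ x y : Circle1, |h x - h y| ≤ L * dist x y}

/-- The Lipschitz norm `‖h‖_Lip = Lip(h) + ‖h‖_∞`. -/
def lipNorm (h : Circle1 → ℝ) : ℝ := lipConst h + supNorm h

/-- `ρ` is the density of the SRB measure of `T`: the density of a `T`-invariant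
probability measure equivalent to `𝔪`. -/
def IsSRBDensity {lam Astar : ℝ} (T : CM lam Astar) (ρ : Circle1 → ℝ) : Prop :=
  IsProbDensity ρ ∧ (∀ᵐ x : Circle1, 0 < ρ x) ∧
    Measure.map T.toMap (volume.withDensity (fun x => ENNReal.ofReal (ρ x))) =
      volume.withDensity (fun x => ENNReal.ofReal (ρ x))

section QDS

variable {lam Astar : ℝ}

/-- `x_{n,k} = T_{n,k} ∘ ⋯ ∘ T_{n,1}` for a triangular array. -/
def arrIter (Tarr : ℕ → ℕ → CM lam Astar) (n : ℕ) : ℕ → Circle1 → Circle1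
  | 0 => id
  | (k+1) => (Tarr n (k+1)).toMap ∘ arrIter Tarr n k

/-- `ℒ_{n,k} ⋯ ℒ_{n,1}` for a triangular array. -/
def arrTransfer (Tarr : ℕ → ℕ → CM lam Astar) (n : ℕ) : ℕ → (Circle1 → ℝ) → (Circle1 → ℝ)
  | 0, h => h
  | (k+1), h => transfer (Tarr n (k+1)) (arrTransfer Tarr n k h)

/-- `f_{n,k} = f ∘ T_{n,k} ∘ ⋯ ∘ T_{n,1}` evaluated at `x`. -/
def fnk (Tarr : ℕ → ℕ → CM lam Astar) (f : Circle1 → ℝ) (n k : ℕ) (x : Circle1) : ℝ :=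
  f (arrIter Tarr n k x)

/-- `ζₙ(x,t) = n⁻¹ (∑_{k<⌊nt⌋} f_{n,k}(x) + {nt}·f_{n,⌊nt⌋}(x))`. -/
def zetaP (Tarr : ℕ → ℕ → CM lam Astar) (f : Circle1 → ℝ) (n : ℕ) (x : Circle1) (t : ℝ) : ℝ :=
  (n : ℝ)⁻¹ * ((∑ k ∈ Finset.range ⌊(n : ℝ) * t⌋₊, fnk Tarr f n k x) +
    Int.fract ((n : ℝ) * t) * fnk Tarr f n ⌊(n : ℝ) * t⌋₊ x)

/-- `ξₙ(x,t) = √n ζₙ(x,t) − √n μ(ζₙ(·,t))` for a measure `μ`. -/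
def xiP (Tarr : ℕ → ℕ → CM lam Astar) (f : Circle1 → ℝ) (μ : Measure Circle1) (n : ℕ)
    (x : Circle1) (t : ℝ) : ℝ :=
  Real.sqrt n * zetaP Tarr f n x t - Real.sqrt n * ∫ y, zetaP Tarr f n y t ∂μ

/-- The Hölder continuity (exponent `η`) of the curve `γ` on `[0,1]`, w.r.t. `d_{C¹}`. -/
def HolderCurve (η : ℝ) (γ : ℝ → CM lam Astar) : Prop :=
  ∃ H : ℝ, ∀ s ∈ Icc (0:ℝ) 1, ∀ t ∈ Icc (0:ℝ) 1, dC1 (γ s) (γ t) ≤ H * |s - t| ^ η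

/-- The convergence-rate condition `sup_n n^η sup_t d_{C¹}(T_{n,⌊nt⌋}, γ_t) < ∞`. -/
def ArrayApprox (η : ℝ) (γ : ℝ → CM lam Astar) (Tarr : ℕ → ℕ → CM lam Astar) : Prop :=
  ∃ M : ℝ, ∀ n : ℕ, 1 ≤ n → ∀ t ∈ Icc (0:ℝ) 1,
    (n : ℝ) ^ η * dC1 (Tarr n ⌊(n : ℝ) * t⌋₊) (γ t) ≤ M

end QDS

/-- The path space: functions `[0,1] → ℝ` with the topology of uniform convergence;
continuous paths (with the supremum metric) embed isometrically. -/
abbrev PathSpace : Type := (Icc (0:ℝ) 1) →ᵤ ℝ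

instance : MeasurableSpace PathSpace := borel PathSpace

/-- A function `[0,1] → ℝ` (given as a function on `ℝ`) as a point of the path space. -/
def pathOf (g : ℝ → ℝ) : PathSpace := UniformFun.ofFun (fun t => g t)

/-- Evaluation of a path at time `t` (clamped to `[0,1]`). -/
def evalPath (t : ℝ) (ω : PathSpace) : ℝ := UniformFun.toFun ω (projIcc 0 1 zero_le_one t)


section Extra

variable {lam Astar : ℝ}

/-- `μ(ζₙ(·,t))` for the measure with density `ρ` w.r.t. `𝔪`. -/
def zetaMean (Tarr : ℕ → ℕ → CM lam Astar) (f : Circle1 → ℝ) (ρ : Circle1 → ℝ)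
    (n : ℕ) (t : ℝ) : ℝ :=
  ∫ y : Circle1, zetaP Tarr f n y t * ρ y

/-- `𝔪(ζₙ(·,t))`, the mean w.r.t. the Lebesgue measure. -/
def zetaMeanM (Tarr : ℕ → ℕ → CM lam Astar) (f : Circle1 → ℝ) (n : ℕ) (t : ℝ) : ℝ :=
  ∫ y : Circle1, zetaP Tarr f n y t

/-- `ξₙ(x,t) = √n ζₙ(x,t) − √n μ(ζₙ(·,t))`, where `μ` has density `ρ`. -/
def xiD (Tarr : ℕ → ℕ → CM lam Astar) (f : Circle1 → ℝ) (ρ : Circle1 → ℝ)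
    (n : ℕ) (x : Circle1) (t : ℝ) : ℝ :=
  Real.sqrt n * zetaP Tarr f n x t - Real.sqrt n * zetaMean Tarr f ρ n t

end Extra

/-- The σ-algebra `𝔉_t` on the path space, generated by the evaluations at times `s ∈ [0,t]`. -/
def pathFiltration (t : ℝ) : MeasurableSpace PathSpace :=
  ⨆ (s : ℝ) (_ : 0 ≤ s ∧ s ≤ t), MeasurableSpace.comap (evalPath s) (borel ℝ)

/-- The process `M_t(ω) = A(ω(t)) − A(ω(0)) − ½∫₀ᵗ σ̂ₛ²·A''(ω(s)) ds`. -/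
def MGproc (σ2 : ℝ → ℝ) (A : ℝ → ℝ) (t : ℝ) (ω : PathSpace) : ℝ :=
  A (evalPath t ω) - A (evalPath 0 ω) -
    (1/2) * ∫ s in (0:ℝ)..t, σ2 s * deriv (deriv A) (evalPath s ω)

/-- `P` solves the martingale problem on `C⁰([0,1],ℝ)` for the generator `½σ̂ₜ² d²/dx²`,
started at `0`:  `P` is a probability measure, concentrated on continuous paths starting at `0`,
and for every `A ∈ C_c^∞(ℝ)` the process `MGproc σ2 A` is a `P`-martingale w.r.t. the
natural filtration `𝔉_t`.  -/
def SolvesMartingaleProblem (σ2 : ℝ → ℝ) (P : Measure PathSpace) : Prop :=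
  IsProbabilityMeasure P ∧
  P {ω : PathSpace | evalPath 0 ω = 0} = 1 ∧
  P {ω : PathSpace | Continuous (UniformFun.toFun ω)} = 1 ∧
  ∀ A : ℝ → ℝ, ContDiff ℝ (⊤ : ℕ∞) A → HasCompactSupport A →
    (∀ t ∈ Icc (0:ℝ) 1, Integrable (MGproc σ2 A t) P) ∧
    (∀ t ∈ Icc (0:ℝ) 1, @Measurable PathSpace ℝ (pathFiltration t) _ (MGproc σ2 A t)) ∧
    (∀ s ∈ Icc (0:ℝ) 1, ∀ t ∈ Icc (0:ℝ) 1, s ≤ t →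
      P[MGproc σ2 A t | pathFiltration s] =ᵐ[P] MGproc σ2 A s)

end

/-!
Compositions of uniformly expanding maps have distortion bounded in terms of the length of the
*image*, uniformly in the number of factors. Hence they push `𝔪` forward to a measure bounded by
`C • 𝔪`, and, by the Lebesgue density theorem, a single map is ergodic with respect to `𝔪`. By von
Neumann's theorem the Birkhoff averages of `f` along `γ_t` then converge to `μ̂ₜ(f)` in `L¹(𝔪)`.

On a short time interval around `t` the array follows `γ_t`. Cutting the orbit into blocks of a
fixed length, over which a small perturbation of the map has a small effect on the orbit, and
moving the `L¹(𝔪)` bound for one block to its starting time with the bound on push-forwards, shows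
that the sum of `f` over the interval is `L¹(𝔪)`-close to `n ∫ μ̂ₛ(f) ds`; comparing `γ_s` with
`γ_t` in the same way shows that `t ↦ μ̂ₜ(f)` is continuous. Finitely many such intervals
cover `[0,t]`. Since the paths are uniformly Lipschitz, convergence in measure at each time is
uniform in time, and it passes from `𝔪` to every `μ ≪ 𝔪`.
-/

section ConvergenceInMeasure

variable {Ω E : Type*} [MeasurableSpace Ω] [PseudoEMetricSpace E]

theorem tendsto_integral_comp_of_tendstoInMeasure {m μ : Measure Ω} [IsFiniteMeasure μ]
    (hμ : μ ≪ m) {X : ℕ → Ω → E} {Y : Ω → E} (hX : TendstoInMeasure m X atTop Y)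
    {F : E → ℝ} (hF : Continuous F)
    (hmeas : ∀ n, AEStronglyMeasurable (fun ω => F (X n ω)) μ)
    {B : ℝ} (hB : ∀ n ω, |F (X n ω)| ≤ B) :
    Tendsto (fun n => ∫ ω, F (X n ω) ∂μ) atTop (𝓝 (∫ ω, F (Y ω) ∂μ)) := by
  refine tendsto_of_subseq_tendsto fun ns hns => ?_
  obtain ⟨ms, -, hms⟩ := (hX.comp hns).exists_seq_tendsto_ae
  exact ⟨ms, tendsto_integral_of_dominated_convergence (fun _ => B) (fun _ => hmeas _)
    (integrable_const B) (fun _ => .of_forall (hB _))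
    (Eventually.mono (hμ.ae_le hms) fun ω hω => (hF.tendsto _).comp hω)⟩

theorem quarter_add_quarter_add_quarter_lt {ε : ENNReal} (hε : ε ≠ 0) (hε_top : ε ≠ ⊤) :
    ε / 4 + ε / 4 + ε / 4 < ε := by
  lift ε to NNReal using hε_top
  have hquarter : (ε : ENNReal) / 4 = ((ε / 4 : NNReal) : ENNReal) := by
    rw [ENNReal.coe_div four_ne_zero]
    rfl
  have hpos : 0 < ε / 4 := div_pos (pos_iff_ne_zero.2 (ENNReal.coe_ne_zero.1 hε)) four_pos
  rw [hquarter]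
  norm_cast
  calc ε / 4 + ε / 4 + ε / 4 < ε / 4 + ε / 4 + ε / 4 + ε / 4 := lt_add_of_pos_right _ hpos
    _ = ε := by ring

theorem tendstoInMeasure_uniformFun_of_equicontinuous {T ι : Type*} [TopologicalSpace T]
    [CompactSpace T] {m : Measure Ω} {l : Filter ι} {Y : ι → Ω → T → E} {Z : Ω → T → E}
    (hY : Equicontinuous fun p : ι × Ω => Y p.1 p.2) (hZ : Equicontinuous Z)
    (h : ∀ t, TendstoInMeasure m (fun n ω => Y n ω t) l fun ω => Z ω t) :
    TendstoInMeasure m (fun n ω => UniformFun.ofFun (Y n ω)) l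
      fun ω => UniformFun.ofFun (Z ω) := by
  refine tendstoInMeasure_of_ne_top fun ε hε hε_top => ?_
  have hε4 : 0 < ε / 4 := ENNReal.div_pos hε.ne' (by norm_num)
  have hnhds (t : T) : {s | (∀ p : ι × Ω, edist (Y p.1 p.2 t) (Y p.1 p.2 s) < ε / 4) ∧
      ∀ ω, edist (Z ω t) (Z ω s) < ε / 4} ∈ 𝓝 t :=
    (hY t _ (edist_mem_uniformity hε4)).and (hZ t _ (edist_mem_uniformity hε4))
  obtain ⟨I, hI⟩ := CompactSpace.elim_nhds_subcover _ hnhds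
  have hsub (n : ι) : {ω | ε ≤ edist (UniformFun.ofFun (Y n ω)) (UniformFun.ofFun (Z ω))} ⊆
      ⋃ t ∈ I, {ω | ε / 4 ≤ edist (Y n ω t) (Z ω t)} := by
    intro ω hω
    by_contra hfar
    simp only [mem_iUnion, mem_ofPred_eq, not_exists, not_le] at hfar
    have hle : edist (UniformFun.ofFun (Y n ω)) (UniformFun.ofFun (Z ω)) ≤
        ε / 4 + ε / 4 + ε / 4 := by
      refine UniformFun.edist_le.2 fun s => ?_
      obtain ⟨t, htI, hYs, hZs⟩ := mem_iUnion₂.1 (hI.ge (mem_univ s))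
      calc edist (Y n ω s) (Z ω s)
          ≤ edist (Y n ω s) (Y n ω t) + edist (Y n ω t) (Z ω t) + edist (Z ω t) (Z ω s) :=
            edist_triangle4 ..
        _ ≤ _ := by
            rw [edist_comm (Y n ω s)]
            exact add_le_add_three (hYs (n, ω)).le (hfar t htI).le (hZs ω).le
    exact (hle.trans_lt (quarter_add_quarter_add_quarter_lt hε.ne' hε_top)).not_ge hω
  have hsum : Tendsto (fun n => ∑ t ∈ I, m {ω | ε / 4 ≤ edist (Y n ω t) (Z ω t)}) l (𝓝 0) := by
    simpa only [Finset.sum_const_zero] using tendsto_finsetSum I fun t _ => h t _ hε4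
  exact tendsto_of_tendsto_of_tendsto_of_le_of_le tendsto_const_nhds hsum (fun _ => zero_le)
    fun n => (measure_mono (hsub n)).trans (measure_biUnion_finset_le I _)

end ConvergenceInMeasure

section MeanErgodic

theorem norm_birkhoffAverage_le {X : Type*} {T : X → X} {f : X → ℝ} {B : ℝ} (hf : ∀ x, ‖f x‖ ≤ B)
    (n : ℕ) (x : X) : ‖birkhoffAverage ℝ T f n x‖ ≤ B := by
  have hB : 0 ≤ B := (norm_nonneg _).trans (hf x)
  calc ‖birkhoffAverage ℝ T f n x‖ ≤ (n : ℝ)⁻¹ * (n * B) := by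
        rw [birkhoffAverage, norm_smul, norm_inv, Real.norm_natCast]
        gcongr
        exact (norm_sum_le_of_le _ fun k _ => hf _).trans_eq (by simp)
    _ = ((n : ℝ)⁻¹ * n) * B := (mul_assoc ..).symm
    _ ≤ B := mul_le_of_le_one_left hB inv_mul_le_one

theorem continuous_birkhoffAverage {X : Type*} [TopologicalSpace X] {T : X → X} {f : X → ℝ}
    (hT : Continuous T) (hf : Continuous f) (n : ℕ) : Continuous (birkhoffAverage ℝ T f n) :=
  (continuous_finsetSum _ fun k _ => hf.comp (hT.iterate k)).const_smul (n : ℝ)⁻¹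

variable {Ω : Type*} [MeasurableSpace Ω] {ν : Measure Ω} {T : Ω → Ω} {f : Ω → ℝ}

/-- The Koopman operator `g ↦ g ∘ T` on `L²`. -/
noncomputable def koopman (hT : MeasurePreserving T ν ν) : Lp ℝ 2 ν →L[ℝ] Lp ℝ 2 ν :=
  (Lp.compMeasurePreservingₗᵢ ℝ T hT).toContinuousLinearMap

theorem koopman_iterate_toLp (hT : MeasurePreserving T ν ν) (hf : MemLp f 2 ν) (k : ℕ) :
    (koopman hT)^[k] (hf.toLp f) =
      (hf.comp_measurePreserving (hT.iterate k)).toLp (f ∘ T^[k]) := by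
  induction k with
  | zero => rfl
  | succ k ih =>
    rw [Function.iterate_succ_apply', ih]
    exact Lp.toLp_compMeasurePreserving _ hT

theorem coeFn_birkhoffAverage_koopman (hT : MeasurePreserving T ν ν) (hf : MemLp f 2 ν) (n : ℕ) :
    (birkhoffAverage ℝ (koopman hT) id n (hf.toLp f) : Lp ℝ 2 ν) =ᵐ[ν]
       birkhoffAverage ℝ T f n := by
  have hsum (N : ℕ) : (birkhoffSum (koopman hT) id N (hf.toLp f) : Lp ℝ 2 ν) =ᵐ[ν]
      birkhoffSum T f N := by
    induction N with
    | zero => exact Lp.coeFn_zero ℝ 2 ν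
    | succ N ih =>
      rw [birkhoffSum_succ, id, koopman_iterate_toLp]
      filter_upwards [Lp.coeFn_add (birkhoffSum (koopman hT) id N (hf.toLp f)) _, ih,
        (hf.comp_measurePreserving (hT.iterate N)).coeFn_toLp] with ω h₁ h₂ h₃
      rw [h₁, Pi.add_apply, h₂, h₃, birkhoffSum_succ, Function.comp_apply]
  filter_upwards [hsum n, Lp.coeFn_smul (n : ℝ)⁻¹ (birkhoffSum (koopman hT) id n (hf.toLp f))]
    with ω h₁ h₂
  rw [birkhoffAverage, h₂, Pi.smul_apply, h₁, birkhoffAverage]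

theorem exists_eq_const_of_koopman_eq [IsProbabilityMeasure ν] (hT : Ergodic T ν) {g : Lp ℝ 2 ν}
    (hg : koopman hT.toMeasurePreserving g = g) : ∃ c : ℝ, g = Lp.const 2 ν c := by
  have hcomp : g ∘ T =ᵐ[ν] g :=
    (Lp.coeFn_compMeasurePreserving g hT.toMeasurePreserving).symm.trans (.of_eq (by
      conv_rhs => rw [← hg]
      rfl))
  obtain ⟨c, hc⟩ := hT.ae_eq_const_of_ae_eq_comp_ae (Lp.aestronglyMeasurable g) hcomp
  exact ⟨c, Lp.ext (hc.trans (Lp.coeFn_const 2 ν c).symm)⟩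

theorem koopman_const [IsFiniteMeasure ν] (hT : MeasurePreserving T ν ν) (c : ℝ) :
    koopman hT (Lp.const 2 ν c) = Lp.const 2 ν c :=
  Lp.toLp_compMeasurePreserving (memLp_const c) hT

theorem inner_const_one [IsFiniteMeasure ν] (g : Lp ℝ 2 ν) :
    inner ℝ (Lp.const 2 ν (1 : ℝ)) g = ∫ ω, g ω ∂ν := by
  rw [← indicatorConstLp_univ, L2.inner_indicatorConstLp_one, setIntegral_univ]

theorem tendstoInMeasure_birkhoffAverage_of_ergodic [IsProbabilityMeasure ν] (hT : Ergodic T ν)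
    (hf : MemLp f 2 ν) :
    TendstoInMeasure ν (birkhoffAverage ℝ T f) atTop fun _ => ∫ ω, f ω ∂ν := by
  set U := koopman hT.toMeasurePreserving
  set P := (U.eqLocus (1 : Lp ℝ 2 ν →L[ℝ] Lp ℝ 2 ν)).orthogonalProjectionOnto
  set g := hf.toLp f
  obtain ⟨c, hc⟩ := exists_eq_const_of_koopman_eq hT (P g).2
  have hc_eq : c = ∫ ω, f ω ∂ν := by
    have hone : Lp.const 2 ν (1 : ℝ) ∈ U.eqLocus (1 : Lp ℝ 2 ν →L[ℝ] Lp ℝ 2 ν) :=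
      koopman_const hT.toMeasurePreserving 1
    have hinner := Submodule.inner_orthogonalProjectionOnto_eq_of_mem_left ⟨_, hone⟩ g
    rw [Submodule.coe_inner, hc, inner_const_one, inner_const_one,
      integral_congr_ae (Lp.coeFn_const 2 ν c), integral_congr_ae hf.coeFn_toLp] at hinner
    simpa using hinner
  have hlim := ContinuousLinearMap.tendsto_birkhoffAverage_orthogonalProjection U
    (LinearIsometry.norm_toContinuousLinearMap_le _) g
  rw [hc, hc_eq] at hlim
  exact (tendstoInMeasure_of_tendsto_Lp hlim).congr
    (fun n => coeFn_birkhoffAverage_koopman hT.toMeasurePreserving hf n) (Lp.coeFn_const ..)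

end MeanErgodic

section L1Seminorm

variable {X : Type*} [TopologicalSpace X] [CompactSpace X] [MeasurableSpace X] [BorelSpace X]

/-- The `L¹(m)` norm, as a seminorm on the continuous functions on a compact space. -/
noncomputable def l1Seminorm (m : Measure X) [IsFiniteMeasure m] : Seminorm ℝ C(X, ℝ) :=
  (normSeminorm ℝ (Lp ℝ 1 m)).comp (ContinuousMap.toLp 1 m ℝ).toLinearMap

variable {m : Measure X}

theorem l1Seminorm_apply [IsFiniteMeasure m] (g : C(X, ℝ)) :
    l1Seminorm m g = ∫ x, |g x| ∂m := by
  refine (L1.norm_eq_integral_norm _).trans (integral_congr_ae ?_)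
  filter_upwards [ContinuousMap.coeFn_toLp (p := 1) (𝕜 := ℝ) m g] with x hx
  simp only [ContinuousLinearMap.coe_coe, hx, Real.norm_eq_abs]

theorem continuous_l1Seminorm [IsFiniteMeasure m] : Continuous (l1Seminorm m) :=
  continuous_norm.comp (ContinuousMap.toLp 1 m ℝ).continuous

theorem l1Seminorm_const [IsProbabilityMeasure m] (r : ℝ) :
    l1Seminorm m (ContinuousMap.const X r) = |r| := by
  simp [l1Seminorm_apply]

theorem l1Seminorm_le_norm [IsProbabilityMeasure m] (g : C(X, ℝ)) : l1Seminorm m g ≤ ‖g‖ := by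
  have hle : ∀ᵐ x ∂m, ‖|g x|‖ ≤ ‖g‖ := .of_forall fun x => by simpa using g.norm_coe_le_norm x
  rw [l1Seminorm_apply]
  simpa using (le_abs_self _).trans (norm_integral_le_of_norm_le_const hle)

theorem l1Seminorm_comp_le [IsFiniteMeasure m] {U : C(X, X)} {C : NNReal}
    (hU : m.map U ≤ C • m) (g : C(X, ℝ)) :
    l1Seminorm m (g.comp U) ≤ C * l1Seminorm m g := by
  have hint : Integrable (fun x => |g x|) (C • m) :=
    (map_continuous g).abs.integrable_of_hasCompactSupport (.of_compactSpace _)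
  calc l1Seminorm m (g.comp U) = ∫ x, |g x| ∂m.map U := by
        rw [l1Seminorm_apply, integral_map (map_continuous U).aemeasurable
          (map_continuous g).abs.aestronglyMeasurable]
        rfl
    _ ≤ ∫ x, |g x| ∂(C • m) :=
        integral_mono_measure hU (.of_forall fun _ => abs_nonneg _) hint
    _ = C * l1Seminorm m g := by
        rw [integral_smul_nnreal_measure, l1Seminorm_apply, NNReal.smul_def, smul_eq_mul]

end L1Seminorm

section SequentialComposition

variable {X : Type*} [TopologicalSpace X]

/-- The composition `S k ∘ ⋯ ∘ S 1`. As in `arrIter`, the map `S 0` is never applied. -/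
def seqComp (S : ℕ → C(X, X)) : ℕ → C(X, X)
  | 0 => .id X
  | k + 1 => (S (k + 1)).comp (seqComp S k)

theorem seqComp_add (S : ℕ → C(X, X)) (a k : ℕ) :
    seqComp S (a + k) = (seqComp (fun i => S (a + i)) k).comp (seqComp S a) := by
  induction k with
  | zero => rfl
  | succ k ih => rw [← add_assoc, seqComp, ih]; rfl

theorem coe_seqComp_const (T : C(X, X)) (k : ℕ) : ⇑(seqComp (fun _ => T) k) = T^[k] := by
  induction k with
  | zero => rfl
  | succ k ih => rw [Function.iterate_succ', ← ih]; rfl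

/-- The sum of the observable `g` over the times `a ≤ k < b` along the orbits
`x, S 1 x, S 2 (S 1 x), …`, as a function of `x`. -/
noncomputable def orbitSum (S : ℕ → C(X, X)) (g : C(X, ℝ)) (a b : ℕ) : C(X, ℝ) :=
  ∑ k ∈ Finset.Ico a b, g.comp (seqComp S k)

theorem orbitSum_apply (S : ℕ → C(X, X)) (g : C(X, ℝ)) (a b : ℕ) (x : X) :
    orbitSum S g a b x = ∑ k ∈ Finset.Ico a b, g (seqComp S k x) := by
  simp [orbitSum, ContinuousMap.sum_apply]

theorem orbitSum_add_orbitSum (S : ℕ → C(X, X)) (g : C(X, ℝ)) {a b c : ℕ} (hab : a ≤ b)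
    (hbc : b ≤ c) : orbitSum S g a b + orbitSum S g b c = orbitSum S g a c :=
  Finset.sum_Ico_consecutive _ hab hbc

theorem orbitSum_add_right (S : ℕ → C(X, X)) (g : C(X, ℝ)) (a n : ℕ) :
    orbitSum S g a (a + n) = (orbitSum (fun i => S (a + i)) g 0 n).comp (seqComp S a) := by
  ext x
  simp only [ContinuousMap.comp_apply, orbitSum_apply]
  rw [Finset.sum_Ico_eq_sum_range, Nat.Ico_zero_eq_range, Nat.add_sub_cancel_left]
  simp only [seqComp_add, ContinuousMap.comp_apply]

theorem orbitSum_sub_const (S : ℕ → C(X, X)) (g : C(X, ℝ)) (c : ℝ) {a b : ℕ} (hab : a ≤ b) :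
    orbitSum S (g - .const X c) a b = orbitSum S g a b - .const X ((b - a) * c) := by
  ext x
  simp [orbitSum_apply, Finset.sum_sub_distrib, hab]

variable [CompactSpace X]

theorem norm_orbitSum_le (S : ℕ → C(X, X)) (g : C(X, ℝ)) (a b : ℕ) :
    ‖orbitSum S g a b‖ ≤ (b - a : ℕ) * ‖g‖ := by
  refine (norm_sum_le_of_le _ fun _ _ => (?_ : _ ≤ ‖g‖)).trans_eq (by simp)
  exact (ContinuousMap.norm_le _ (norm_nonneg g)).2 fun x => g.norm_coe_le_norm _

theorem tendsto_seqComp [R1Space X] {ι : Type*} {l : Filter ι} {S : ι → ℕ → C(X, X)}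
    {T : ℕ → C(X, X)} {k : ℕ} (h : ∀ i ∈ Ioc 0 k, Tendsto (S · i) l (𝓝 (T i))) :
    Tendsto (fun j => seqComp (S j) k) l (𝓝 (seqComp T k)) := by
  induction k with
  | zero => exact tendsto_const_nhds
  | succ k ih =>
    exact (h (k + 1) ⟨k.succ_pos, le_rfl⟩).compCM
      (ih fun i hi => h i ⟨hi.1, hi.2.trans k.le_succ⟩)

theorem tendsto_orbitSum [R1Space X] {ι : Type*} {l : Filter ι} {S : ι → ℕ → C(X, X)}
    {T : ℕ → C(X, X)} {b : ℕ} (h : ∀ i ∈ Ioo 0 b, Tendsto (S · i) l (𝓝 (T i)))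
    (g : C(X, ℝ)) (a : ℕ) :
    Tendsto (fun j => orbitSum (S j) g a b) l (𝓝 (orbitSum T g a b)) :=
  tendsto_finsetSum _ fun _ hk => tendsto_const_nhds.compCM <| tendsto_seqComp fun i hi =>
    h i ⟨hi.1, hi.2.trans_lt (Finset.mem_Ico.1 hk).2⟩

end SequentialComposition

section ErgodicMean

variable {X : Type*} [PseudoMetricSpace X] [CompactSpace X] [MeasurableSpace X]

/-- The Birkhoff averages of `f` along `T` converge to the constant `c` in `L¹(m)`. The measure
`m` need not be invariant. -/
def HasErgodicMean (m : Measure X) (T : X → X) (f : X → ℝ) (c : ℝ) : Prop :=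
  Tendsto (fun n => ∫ x, |birkhoffAverage ℝ T f n x - c| ∂m) atTop (𝓝 0)

/-- All the compositions `S k ∘ ⋯ ∘ S 1` push `m` forward to a measure bounded by `C • m`. -/
def HasBoundedPushforwards (m : Measure X) (C : NNReal) (S : ℕ → C(X, X)) : Prop :=
  ∀ k, m.map (seqComp S k) ≤ C • m

variable [BorelSpace X] {m : Measure X} [IsProbabilityMeasure m] {C : NNReal}
  {T : C(X, X)} {f : C(X, ℝ)} {c : ℝ}

theorem HasErgodicMean.tendsto_l1Seminorm_orbitSum (h : HasErgodicMean m T f c) :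
    Tendsto (fun n : ℕ => (n : ℝ)⁻¹ * l1Seminorm m (orbitSum (fun _ => T) (f - .const X c) 0 n))
      atTop (𝓝 0) := by
  refine h.congr' ?_
  filter_upwards [eventually_ne_atTop 0] with n hn
  rw [l1Seminorm_apply, ← integral_const_mul]
  refine integral_congr_ae (.of_forall fun x => ?_)
  have havg : birkhoffAverage ℝ T f n x - c =
      (n : ℝ)⁻¹ * orbitSum (fun _ => T) (f - .const X c) 0 n x := by
    have hn' : (n : ℝ) ≠ 0 := Nat.cast_ne_zero.2 hn
    simp only [orbitSum_sub_const _ _ _ n.zero_le, ContinuousMap.sub_apply, orbitSum_apply,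
      coe_seqComp_const, ContinuousMap.const_apply, birkhoffAverage, birkhoffSum, smul_eq_mul,
      Nat.Ico_zero_eq_range]
    field_simp
    simp [mul_comm]
  simp only [havg, abs_mul, abs_inv, Nat.abs_cast]

theorem exists_l1Seminorm_orbitSum_lt_of_dist_lt {g : C(X, ℝ)} {n : ℕ} {r : ℝ}
    (h : l1Seminorm m (orbitSum (fun _ => T) g 0 n) < r) :
    ∃ δ > 0, ∀ S : ℕ → C(X, X), (∀ i ∈ Ioo 0 n, dist (S i) T < δ) →
      l1Seminorm m (orbitSum S g 0 n) < r := by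
  let restr : (ℕ → C(X, X)) → Ioo 0 n → C(X, X) := fun S i => S i
  have hcoord : ∀ i ∈ Ioo 0 n,
      Tendsto (fun S : ℕ → C(X, X) => S i) (comap restr (𝓝 fun _ => T)) (𝓝 T) := fun i hi =>
    ((continuous_apply (⟨i, hi⟩ : Ioo 0 n)).tendsto fun _ => T).comp tendsto_comap
  have hsum := (continuous_l1Seminorm (m := m)).continuousAt.tendsto.comp
    (tendsto_orbitSum hcoord g 0)
  obtain ⟨δ, hδ, hball⟩ := (Metric.nhds_basis_ball.comap restr).eventually_iff.1
    (hsum.eventually_lt_const h)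
  exact ⟨δ, hδ, fun S hS => hball ((dist_pi_lt_iff hδ).2 fun i => hS i i.2)⟩

theorem exists_l1Seminorm_orbitSum_block_le (h : HasErgodicMean m T f c) (C : NNReal) {ε : ℝ}
    (hε : 0 < ε) : ∃ N > 0, ∃ δ > 0, ∀ S : ℕ → C(X, X), HasBoundedPushforwards m C S →
      ∀ a, (∀ i ∈ Ioo a (a + N), dist (S i) T < δ) →
        l1Seminorm m (orbitSum S (f - .const X c) a (a + N)) ≤ ε * N := by
  have hC : (0 : ℝ) < C + 1 := by positivity
  obtain ⟨N, hNavg, hN⟩ := ((h.tendsto_l1Seminorm_orbitSum.eventually_lt_const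
    (div_pos hε hC)).and (eventually_gt_atTop 0)).exists
  have hN' : (0 : ℝ) < N := Nat.cast_pos.2 hN
  rw [inv_mul_lt_iff₀ hN'] at hNavg
  obtain ⟨δ, hδ, hclose⟩ := exists_l1Seminorm_orbitSum_lt_of_dist_lt hNavg
  refine ⟨N, hN, δ, hδ, fun S hS a ha => ?_⟩
  have hblock := hclose (fun i => S (a + i)) fun i hi =>
    ha _ ⟨Nat.lt_add_of_pos_right hi.1, Nat.add_lt_add_left hi.2 a⟩
  rw [orbitSum_add_right]
  calc _ ≤ C * l1Seminorm m (orbitSum (fun i => S (a + i)) (f - .const X c) 0 N) :=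
        l1Seminorm_comp_le (hS a) _
    _ ≤ (C + 1) * (N * (ε / (C + 1))) := by
        gcongr
        exact le_add_of_nonneg_right zero_le_one
    _ = ε * N := by field_simp

theorem exists_l1Seminorm_orbitSum_le (h : HasErgodicMean m T f c) (C : NNReal) {ε : ℝ}
    (hε : 0 < ε) : ∃ δ > 0, ∃ B, ∀ S : ℕ → C(X, X), HasBoundedPushforwards m C S →
      ∀ a b, a ≤ b → (∀ i ∈ Ioo a b, dist (S i) T < δ) →
        l1Seminorm m (orbitSum S (f - .const X c) a b) ≤ ε * (b - a) + B := by
  obtain ⟨N, hN, δ, hδ, hblock⟩ := exists_l1Seminorm_orbitSum_block_le h C hε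
  set g := f - .const X c
  refine ⟨δ, hδ, N * ‖g‖, fun S hS a b hab hclose => ?_⟩
  induction hn : b - a using Nat.strong_induction_on generalizing a with | _ n ih
  rcases lt_or_ge b (a + N) with hb | hb
  · have hlen : b - a ≤ N := by omega
    calc l1Seminorm m (orbitSum S g a b) ≤ (b - a : ℕ) * ‖g‖ :=
          (l1Seminorm_le_norm _).trans (norm_orbitSum_le S g a b)
      _ ≤ N * ‖g‖ := by gcongr
      _ ≤ ε * (b - a) + N * ‖g‖ :=
          le_add_of_nonneg_left (mul_nonneg hε.le (sub_nonneg.2 (Nat.cast_le.2 hab)))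
  · have hfirst := hblock S hS a fun i hi => hclose i ⟨hi.1, hi.2.trans_le hb⟩
    have hrest := ih (b - (a + N)) (by omega) (a + N) hb
      (fun i hi => hclose i ⟨(Nat.le_add_right a N).trans_lt hi.1, hi.2⟩) rfl
    rw [← orbitSum_add_orbitSum S g (Nat.le_add_right a N) hb]
    refine (map_add_le_add _ _ _).trans ((add_le_add hfirst hrest).trans_eq ?_)
    push_cast
    ring

theorem HasErgodicMean.exists_abs_sub_le (h : HasErgodicMean m T f c) (C : NNReal) {ε : ℝ}
    (hε : 0 < ε) : ∃ δ > 0, ∀ (T' : C(X, X)) (c' : ℝ), dist T' T < δ →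
      HasBoundedPushforwards m C (fun _ => T') → HasErgodicMean m T' f c' → |c' - c| ≤ ε := by
  obtain ⟨δ, hδ, B, hB⟩ := exists_l1Seminorm_orbitSum_le h C hε
  refine ⟨δ, hδ, fun T' c' hT' hbdd h' => ?_⟩
  have hbound (n : ℕ) : |c' - c| * n ≤ ε * n + B +
      l1Seminorm m (orbitSum (fun _ => T') (f - .const X c') 0 n) := by
    have hsub : ContinuousMap.const X ((c' - c) * n) =
        orbitSum (fun _ => T') (f - .const X c) 0 n -
          orbitSum (fun _ => T') (f - .const X c') 0 n := by
      rw [orbitSum_sub_const _ _ _ n.zero_le, orbitSum_sub_const _ _ _ n.zero_le]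
      ext x
      simp
      ring
    calc |c' - c| * n = l1Seminorm m (.const X ((c' - c) * n)) := by
          rw [l1Seminorm_const, abs_mul, Nat.abs_cast]
      _ ≤ _ := by
          rw [hsub]
          refine (map_sub_le_add _ _ _).trans ?_
          gcongr
          simpa using hB _ hbdd 0 n n.zero_le fun _ _ => hT'
  have hlim : Tendsto (fun n : ℕ => ε + B * (n : ℝ)⁻¹ +
      (n : ℝ)⁻¹ * l1Seminorm m (orbitSum (fun _ => T') (f - .const X c') 0 n)) atTop (𝓝 ε) := by
    simpa using ((tendsto_inv_atTop_nhds_zero_nat (𝕜 := ℝ)).const_mul B).const_add ε |>.add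
      h'.tendsto_l1Seminorm_orbitSum
  refine ge_of_tendsto hlim ?_
  filter_upwards [eventually_gt_atTop 0] with n hn
  have hn' : (0 : ℝ) < n := Nat.cast_pos.2 hn
  refine ((le_div_iff₀ hn').2 (hbound n)).trans_eq ?_
  field_simp

theorem continuousOn_of_hasErgodicMean {τ : Type*} [TopologicalSpace τ] {s : Set τ}
    {γ : τ → C(X, X)} {c : τ → ℝ} (hγ : ContinuousOn γ s)
    (hbdd : ∀ t ∈ s, HasBoundedPushforwards m C fun _ => γ t)
    (hmean : ∀ t ∈ s, HasErgodicMean m (γ t) f (c t)) : ContinuousOn c s := by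
  refine fun t ht => Metric.tendsto_nhds.2 fun ε hε => ?_
  obtain ⟨δ, hδ, hclose⟩ := (hmean t ht).exists_abs_sub_le C (half_pos hε)
  filter_upwards [Metric.tendsto_nhds.1 (hγ t ht) δ hδ, self_mem_nhdsWithin] with s hs hsmem
  exact (hclose _ _ hs (hbdd s hsmem) (hmean s hsmem)).trans_lt (half_lt_self hε)

end ErgodicMean

section InterpolatedSum

variable {V : Type*} [NormedAddCommGroup V] [NormedSpace ℝ V] {a : ℕ → V} {B : NNReal}

/-- The partial sums `u ↦ ∑ k < u, a k`, extended from integer to real `u ≥ 0` by linear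
interpolation. -/
noncomputable def interpolatedSum (a : ℕ → V) (u : ℝ) : V :=
  ∑ k ∈ Finset.range ⌊u⌋₊, a k + Int.fract u • a ⌊u⌋₊

theorem norm_interpolatedSum_sub_sum_le (ha : ∀ k, ‖a k‖ ≤ B) (u : ℝ) :
    ‖interpolatedSum a u - ∑ k ∈ Finset.range ⌊u⌋₊, a k‖ ≤ B := by
  rw [interpolatedSum, add_sub_cancel_left, norm_smul, Real.norm_eq_abs, Int.abs_fract]
  exact (mul_le_of_le_one_left (norm_nonneg _) (Int.fract_lt_one u).le).trans (ha _)

theorem norm_interpolatedSum_sub_le (ha : ∀ k, ‖a k‖ ≤ B) {u v : ℝ} (hu : 0 ≤ u) (huv : u ≤ v) :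
    ‖interpolatedSum a v - interpolatedSum a u‖ ≤ B * (v - u) := by
  have hfract {w : ℝ} (hw : 0 ≤ w) : Int.fract w = w - ⌊w⌋₊ := by
    rw [Int.fract, natCast_floor_eq_intCast_floor hw]
  have hsmul {r : ℝ} (hr : 0 ≤ r) (k : ℕ) : ‖r • a k‖ ≤ B * r := by
    rw [norm_smul, Real.norm_of_nonneg hr, mul_comm]
    exact mul_le_mul_of_nonneg_right (ha k) hr
  have hv := hu.trans huv
  rcases (Nat.floor_mono huv).eq_or_lt with heq | hlt
  · have hdiff : interpolatedSum a v - interpolatedSum a u = (v - u) • a ⌊u⌋₊ := by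
      simp only [interpolatedSum, hfract hu, hfract hv, heq]
      module
    exact hdiff ▸ hsmul (sub_nonneg.2 huv) _
  · have hdiff : interpolatedSum a v - interpolatedSum a u = (1 - Int.fract u) • a ⌊u⌋₊ +
        ∑ k ∈ Finset.Ico (⌊u⌋₊ + 1) ⌊v⌋₊, a k + Int.fract v • a ⌊v⌋₊ := by
      rw [interpolatedSum, interpolatedSum, ← Finset.sum_range_add_sum_Ico _ hlt,
        Finset.sum_range_succ]
      module
    have hmid : ‖∑ k ∈ Finset.Ico (⌊u⌋₊ + 1) ⌊v⌋₊, a k‖ ≤ B * (⌊v⌋₊ - (⌊u⌋₊ + 1)) := by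
      refine (norm_sum_le_of_le _ fun k _ => ha k).trans_eq ?_
      rw [Finset.sum_const, Nat.card_Ico, nsmul_eq_mul, Nat.cast_sub hlt]
      push_cast
      ring
    calc ‖interpolatedSum a v - interpolatedSum a u‖
        ≤ B * (1 - Int.fract u) + B * (⌊v⌋₊ - (⌊u⌋₊ + 1)) + B * Int.fract v := by
          rw [hdiff]
          exact norm_add₃_le.trans (add_le_add_three
            (hsmul (sub_nonneg.2 (Int.fract_lt_one u).le) _) hmid (hsmul (Int.fract_nonneg v) _))
      _ = B * (v - u) := by
          rw [hfract hu, hfract hv]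
          ring

theorem lipschitzOnWith_interpolatedSum (ha : ∀ k, ‖a k‖ ≤ B) :
    LipschitzOnWith B (interpolatedSum a) (Ici 0) := by
  refine LipschitzOnWith.of_dist_le_mul fun u hu v hv => ?_
  rw [dist_eq_norm, Real.dist_eq]
  rcases le_total u v with huv | hvu
  · rw [norm_sub_rev, abs_sub_comm, abs_of_nonneg (sub_nonneg.2 huv)]
    exact norm_interpolatedSum_sub_le ha hu huv
  · rw [abs_of_nonneg (sub_nonneg.2 hvu)]
    exact norm_interpolatedSum_sub_le ha hv hvu

theorem lipschitzOnWith_interpolatedMean (ha : ∀ k, ‖a k‖ ≤ B) (n : ℕ) :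
    LipschitzOnWith B (fun t : ℝ => (n : ℝ)⁻¹ • interpolatedSum a (n * t)) (Ici 0) := by
  refine LipschitzOnWith.of_dist_le_mul fun s hs t ht => ?_
  have hn : (0 : ℝ) ≤ n := n.cast_nonneg
  calc dist ((n : ℝ)⁻¹ • interpolatedSum a (n * s)) ((n : ℝ)⁻¹ • interpolatedSum a (n * t))
      ≤ (n : ℝ)⁻¹ * (B * (n * dist s t)) := by
        rw [dist_smul₀, Real.norm_of_nonneg (inv_nonneg.2 hn)]
        gcongr
        refine ((lipschitzOnWith_interpolatedSum ha).dist_le_mul _ (mul_nonneg hn hs) _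
          (mul_nonneg hn ht)).trans_eq ?_
        rw [Real.dist_eq, ← mul_sub, abs_mul, Nat.abs_cast, Real.dist_eq]
    _ = ((n : ℝ)⁻¹ * n) * (B * dist s t) := by ring
    _ ≤ B * dist s t := mul_le_of_le_one_left (by positivity) inv_mul_le_one

end InterpolatedSum

section Quasistatic

theorem abs_floor_sub_floor_sub_le {u v : ℝ} (hu : 0 ≤ u) (hv : 0 ≤ v) :
    |(⌊v⌋₊ - ⌊u⌋₊ : ℝ) - (v - u)| ≤ 1 := by
  rw [abs_le]
  constructor <;> linarith [Nat.floor_le hu, Nat.floor_le hv, Nat.lt_floor_add_one u,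
    Nat.lt_floor_add_one v]

theorem abs_integral_sub_le {c : ℝ → ℝ} {s t c₀ ε : ℝ} (hst : s ≤ t)
    (hc : IntervalIntegrable c volume s t) (hnear : ∀ u ∈ Icc s t, |c u - c₀| ≤ ε) :
    |(∫ u in s..t, c u) - (t - s) * c₀| ≤ ε * (t - s) := by
  rw [← smul_eq_mul, ← intervalIntegral.integral_const,
    ← intervalIntegral.integral_sub hc intervalIntegrable_const]
  rw [← Real.norm_eq_abs, ← abs_of_nonneg (sub_nonneg.2 hst)]
  exact intervalIntegral.norm_integral_le_of_norm_le_const fun u hu =>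
    hnear u (Ioc_subset_Icc_self (uIoc_of_le hst ▸ hu))

theorem rel_Icc_of_locally {R : ℝ → ℝ → Prop} {a b : ℝ} (hab : a ≤ b)
    (htrans : ∀ r ∈ Icc a b, ∀ s ∈ Icc a b, ∀ t ∈ Icc a b, r ≤ s → s ≤ t →
      R r s → R s t → R r t)
    (hloc : ∀ x ∈ Icc a b, ∃ U : Set ℝ, IsOpen U ∧ x ∈ U ∧
      ∀ s ∈ U ∩ Icc a b, ∀ t ∈ U ∩ Icc a b, s ≤ t → R s t) : R a b := by
  choose! U hUopen hxU hU using hloc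
  obtain ⟨τ, hτ0, hτmono, ⟨n, hτn⟩, hτU⟩ := exists_monotone_Icc_subset_open_cover_Icc hab
    (c := fun x : Icc a b => Subtype.val ⁻¹' U x)
    (fun x => (hUopen x x.2).preimage continuous_subtype_val)
    (fun x _ => mem_iUnion.2 ⟨x, hxU x x.2⟩)
  have hstep (k : ℕ) : R (τ k) (τ (k + 1)) := by
    obtain ⟨x, hx⟩ := hτU k
    have hle := hτmono k.le_succ
    exact hU x x.2 _ ⟨hx (left_mem_Icc.2 hle), (τ k).2⟩ _ ⟨hx (right_mem_Icc.2 hle), (τ _).2⟩ hle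
  have hchain (k : ℕ) : R a (τ (k + 1)) := by
    induction k with
    | zero => simpa [hτ0] using hstep 0
    | succ k ih =>
      exact htrans a (left_mem_Icc.2 hab) _ (τ _).2 _ (τ _).2 (τ _).2.1 (hτmono (Nat.le_succ _))
        ih (hstep _)
  simpa [hτn (n + 1) n.le_succ] using hchain n

variable {X : Type*} [PseudoMetricSpace X] [CompactSpace X] [MeasurableSpace X]

/-- The triangular array `S` is quasistatic along the curve `γ` of maps, `c t` being the ergodic
mean of the observable `f` along `γ t`: at time `t ∈ [0,1]` the `n`-th row of `S` is uniformly close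
to `γ t`, and the compositions of the maps involved distort `m` by at most the factor `C`. -/
structure IsQuasistatic (m : Measure X) (C : NNReal) (S : ℕ → ℕ → C(X, X)) (γ : ℝ → C(X, X))
    (f : C(X, ℝ)) (c : ℝ → ℝ) : Prop where
  continuousOn_curve : ContinuousOn γ (Icc 0 1)
  tendstoUniformlyOn : TendstoUniformlyOn (fun (n : ℕ) (t : ℝ) => S n ⌊n * t⌋₊) γ atTop (Icc 0 1)
  bounded_array : ∀ n, HasBoundedPushforwards m C (S n)
  bounded_curve : ∀ t ∈ Icc (0 : ℝ) 1, HasBoundedPushforwards m C fun _ => γ t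
  hasErgodicMean : ∀ t ∈ Icc (0 : ℝ) 1, HasErgodicMean m (γ t) f (c t)

variable {m : Measure X} {C : NNReal} {S : ℕ → ℕ → C(X, X)} {γ : ℝ → C(X, X)} {f : C(X, ℝ)}
  {c : ℝ → ℝ} {ε r s t : ℝ}

theorem IsQuasistatic.eventually_dist_lt (h : IsQuasistatic m C S γ f c) {T : C(X, X)}
    {δ : ℝ} (hδ : 0 < δ) (hst : Icc s t ⊆ Icc 0 1) (hT : ∀ u ∈ Icc s t, dist (γ u) T < δ) :
    ∀ᶠ n : ℕ in atTop, ∀ i ∈ Ioo ⌊n * s⌋₊ ⌊n * t⌋₊, dist (S n i) T < 2 * δ := by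
  filter_upwards [Metric.tendstoUniformlyOn_iff.1 h.tendstoUniformlyOn δ hδ,
    eventually_gt_atTop 0] with n hn hn0 i hi
  have hn0' : (0 : ℝ) < n := Nat.cast_pos.2 hn0
  have hi_mem : (i / n : ℝ) ∈ Icc s t :=
    ⟨(le_div_iff₀' hn0').2 (Nat.lt_of_floor_lt hi.1).le,
      (div_le_iff₀' hn0').2 ((Nat.le_floor_iff' (Nat.ne_zero_of_lt hi.1)).1 hi.2.le)⟩
  have hclose := hn _ (hst hi_mem)
  rw [mul_div_cancel₀ _ hn0'.ne', Nat.floor_natCast, dist_comm] at hclose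
  calc dist (S n i) T ≤ dist (S n i) (γ (i / n)) + dist (γ (i / n)) T := dist_triangle ..
    _ < δ + δ := add_lt_add hclose (hT _ hi_mem)
    _ = 2 * δ := (two_mul δ).symm

variable [BorelSpace X]

/-- Up to a bounded error, the sum of `f` over the times in `[n s, n t)` differs from
`n ∫ₛᵗ c` by at most `ε n (t - s)` in `L¹(m)`, for all large `n`. -/
def HasIncrementBound (m : Measure X) [IsFiniteMeasure m] (S : ℕ → ℕ → C(X, X)) (f : C(X, ℝ))
    (c : ℝ → ℝ) (ε s t : ℝ) : Prop :=
  ∃ B : ℝ, ∀ᶠ n : ℕ in atTop, l1Seminorm m (orbitSum (S n) f ⌊n * s⌋₊ ⌊n * t⌋₊ -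
    .const X (n * ∫ u in s..t, c u)) ≤ ε * (t - s) * n + B

variable [IsProbabilityMeasure m]

theorem l1Seminorm_orbitSum_sub_const_le {S : ℕ → C(X, X)} {a b : ℕ} (hab : a ≤ b) (c₀ I : ℝ) :
    l1Seminorm m (orbitSum S f a b - .const X I) ≤
      l1Seminorm m (orbitSum S (f - .const X c₀) a b) + |(b - a) * c₀ - I| := by
  rw [← l1Seminorm_const (m := m), orbitSum_sub_const _ _ _ hab]
  refine (congrArg _ ?_).trans_le (map_add_le_add _ _ _)
  ext x
  simp

theorem HasIncrementBound.trans (hrs : r ≤ s) (hst : s ≤ t)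
    (hcrs : IntervalIntegrable c volume r s) (hcst : IntervalIntegrable c volume s t)
    (h₁ : HasIncrementBound m S f c ε r s) (h₂ : HasIncrementBound m S f c ε s t) :
    HasIncrementBound m S f c ε r t := by
  obtain ⟨B₁, h₁⟩ := h₁
  obtain ⟨B₂, h₂⟩ := h₂
  refine ⟨B₁ + B₂, ?_⟩
  filter_upwards [h₁, h₂] with n h₁ h₂
  have hsplit : orbitSum (S n) f ⌊n * r⌋₊ ⌊n * t⌋₊ - .const X (n * ∫ u in r..t, c u) =
      (orbitSum (S n) f ⌊n * r⌋₊ ⌊n * s⌋₊ - .const X (n * ∫ u in r..s, c u)) +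
        (orbitSum (S n) f ⌊n * s⌋₊ ⌊n * t⌋₊ - .const X (n * ∫ u in s..t, c u)) := by
    rw [← orbitSum_add_orbitSum (b := ⌊n * s⌋₊) _ _ (by gcongr) (by gcongr),
      ← intervalIntegral.integral_add_adjacent_intervals hcrs hcst]
    ext x
    simp
    ring
  rw [hsplit]
  exact (map_add_le_add _ _ _).trans ((add_le_add h₁ h₂).trans_eq (by ring))

namespace IsQuasistatic

theorem continuousOn_mean (h : IsQuasistatic m C S γ f c) : ContinuousOn c (Icc 0 1) :=
  continuousOn_of_hasErgodicMean h.continuousOn_curve h.bounded_curve h.hasErgodicMean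

theorem intervalIntegrable (h : IsQuasistatic m C S γ f c) (hs : s ∈ Icc 0 1) (ht : t ∈ Icc 0 1) :
    IntervalIntegrable c volume s t :=
  (h.continuousOn_mean.mono (uIcc_subset_Icc hs ht)).intervalIntegrable

theorem exists_isOpen_forall_near (h : IsQuasistatic m C S γ f c) {x : ℝ} (hx : x ∈ Icc 0 1)
    {δ : ℝ} (hδ : 0 < δ) (hε : 0 < ε) : ∃ U : Set ℝ, IsOpen U ∧ x ∈ U ∧
      ∀ s ∈ U ∩ Icc 0 1, ∀ t ∈ U ∩ Icc 0 1,
        ∀ u ∈ Icc s t, dist (γ u) (γ x) < δ ∧ dist (c u) (c x) < ε := by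
  obtain ⟨ρ, hρ, hball⟩ := Metric.mem_nhdsWithin_iff.1
    ((Metric.tendsto_nhds.1 (h.continuousOn_curve x hx) δ hδ).and
      (Metric.tendsto_nhds.1 (h.continuousOn_mean x hx) ε hε))
  have hconn : (Metric.ball x ρ ∩ Icc 0 1).OrdConnected :=
    Real.ball_eq_Ioo x ρ ▸ ordConnected_Ioo.inter ordConnected_Icc
  exact ⟨Metric.ball x ρ, Metric.isOpen_ball, Metric.mem_ball_self hρ,
    fun s hs t ht u hu => hball (hconn.out hs ht hu)⟩

theorem exists_isOpen_hasIncrementBound (h : IsQuasistatic m C S γ f c) {x : ℝ}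
    (hx : x ∈ Icc 0 1) (hε : 0 < ε) : ∃ U : Set ℝ, IsOpen U ∧ x ∈ U ∧
      ∀ s ∈ U ∩ Icc 0 1, ∀ t ∈ U ∩ Icc 0 1, s ≤ t → HasIncrementBound m S f c ε s t := by
  obtain ⟨δ, hδ, B, hB⟩ := exists_l1Seminorm_orbitSum_le (h.hasErgodicMean x hx) C (half_pos hε)
  obtain ⟨U, hU, hxU, hnear⟩ := h.exists_isOpen_forall_near hx (half_pos hδ) (half_pos hε)
  refine ⟨U, hU, hxU, fun s hs t ht hst => ⟨ε / 2 + B + |c x|, ?_⟩⟩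
  filter_upwards [h.eventually_dist_lt (half_pos hδ) (Icc_subset_Icc hs.2.1 ht.2.2)
    fun u hu => (hnear s hs t ht u hu).1] with n hclose
  rw [mul_div_cancel₀ _ two_ne_zero] at hclose
  have hfloor_le : ⌊n * s⌋₊ ≤ ⌊n * t⌋₊ := by gcongr
  have hfloor := abs_floor_sub_floor_sub_le (mul_nonneg n.cast_nonneg hs.2.1)
    (mul_nonneg n.cast_nonneg ht.2.1)
  set p := ⌊n * s⌋₊
  set q := ⌊n * t⌋₊
  have hmean := abs_integral_sub_le hst (h.intervalIntegrable hs.2 ht.2)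
    fun u hu => (hnear s hs t ht u hu).2.le
  have hconst : |(q - p) * c x - n * ∫ u in s..t, c u| ≤ |c x| + n * (ε / 2 * (t - s)) := by
    calc |(q - p) * c x - n * ∫ u in s..t, c u|
        = |((q - p) - (n * t - n * s)) * c x -
            n * ((∫ u in s..t, c u) - (t - s) * c x)| := by
          congr 1; ring
      _ ≤ 1 * |c x| + n * (ε / 2 * (t - s)) := by
          refine (abs_sub _ _).trans ?_
          rw [abs_mul, abs_mul, Nat.abs_cast]
          gcongr
      _ = _ := by rw [one_mul]
  calc _ ≤ ε / 2 * (q - p) + B + (|c x| + n * (ε / 2 * (t - s))) :=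
        (l1Seminorm_orbitSum_sub_const_le hfloor_le (c x) _).trans
          (add_le_add (hB _ (h.bounded_array n) p q hfloor_le hclose) hconst)
    _ ≤ ε / 2 * (1 + (n * t - n * s)) + B + (|c x| + n * (ε / 2 * (t - s))) := by
        gcongr
        exact sub_le_iff_le_add.1 (le_of_abs_le hfloor)
    _ = ε * (t - s) * n + (ε / 2 + B + |c x|) := by ring

theorem hasIncrementBound (h : IsQuasistatic m C S γ f c) (hε : 0 < ε) (hs : 0 ≤ s)
    (hst : s ≤ t) (ht : t ≤ 1) : HasIncrementBound m S f c ε s t := by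
  have hsub : Icc s t ⊆ Icc 0 1 := Icc_subset_Icc hs ht
  refine rel_Icc_of_locally hst
    (fun u hu v hv w hw huv hvw => .trans huv hvw (h.intervalIntegrable (hsub hu) (hsub hv))
      (h.intervalIntegrable (hsub hv) (hsub hw))) fun x hx => ?_
  obtain ⟨U, hU, hxU, hbound⟩ := h.exists_isOpen_hasIncrementBound (hsub hx) hε
  exact ⟨U, hU, hxU, fun u hu v hv => hbound u ⟨hu.1, hsub hu.2⟩ v ⟨hv.1, hsub hv.2⟩⟩

theorem tendsto_l1Seminorm_orbitSum (h : IsQuasistatic m C S γ f c) (ht : t ∈ Icc 0 1) :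
    Tendsto (fun n : ℕ => l1Seminorm m ((n : ℝ)⁻¹ • orbitSum (S n) f 0 ⌊n * t⌋₊ -
      .const X (∫ u in 0..t, c u))) atTop (𝓝 0) := by
  refine Metric.tendsto_nhds.2 fun ε hε => ?_
  obtain ⟨B, hB⟩ := h.hasIncrementBound (half_pos hε) le_rfl ht.1 ht.2
  have hlim : Tendsto (fun n : ℕ => ε / 2 * t + B * (n : ℝ)⁻¹) atTop (𝓝 (ε / 2 * t)) := by
    simpa using ((tendsto_inv_atTop_nhds_zero_nat (𝕜 := ℝ)).const_mul B).const_add (ε / 2 * t)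
  have hlt : ε / 2 * t < ε := by nlinarith [ht.2]
  filter_upwards [hB, hlim.eventually_lt_const hlt, eventually_gt_atTop 0] with n hn hnlt hn0
  have hn0' : (0 : ℝ) < n := Nat.cast_pos.2 hn0
  rw [mul_zero, Nat.floor_zero, sub_zero] at hn
  rw [Real.dist_0_eq_abs, abs_of_nonneg (apply_nonneg _ _)]
  calc l1Seminorm m ((n : ℝ)⁻¹ • orbitSum (S n) f 0 ⌊n * t⌋₊ - .const X (∫ u in 0..t, c u))
      = (n : ℝ)⁻¹ * l1Seminorm m (orbitSum (S n) f 0 ⌊n * t⌋₊ -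
          .const X (n * ∫ u in 0..t, c u)) := by
        have hconst (I : ℝ) : ContinuousMap.const X I = (n : ℝ)⁻¹ • .const X (n * I) :=
          ContinuousMap.ext fun _ => (inv_mul_cancel_left₀ hn0'.ne' I).symm
        rw [hconst (∫ u in 0..t, c u), ← smul_sub, map_smul_eq_mul,
          Real.norm_of_nonneg (inv_nonneg.2 hn0'.le)]
    _ ≤ (n : ℝ)⁻¹ * (ε / 2 * t * n + B) := by gcongr
    _ = ε / 2 * t + B * (n : ℝ)⁻¹ := by field_simp
    _ < ε := hnlt

end IsQuasistatic

end Quasistatic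

section MeanPath

theorem continuous_uniformFun_of_continuous {X T : Type*} [TopologicalSpace X]
    [TopologicalSpace T] [LocallyCompactSpace X] [CompactSpace T] {G : T → C(X, ℝ)}
    (hG : Continuous G) : Continuous fun x => UniformFun.ofFun fun t => G t x := by
  let curried : C(X, C(T, ℝ)) :=
    (ContinuousMap.mk (fun p : X × T => G p.2 p.1) (by fun_prop)).curry
  exact continuous_iff_continuousAt.2 fun x => UniformFun.tendsto_iff_tendstoUniformly.2
    (ContinuousMap.tendsto_iff_tendstoUniformly.1 (curried.continuous.tendsto x))

variable {X : Type*} [PseudoMetricSpace X] [CompactSpace X]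

/-- The function `x ↦ ζₙ(x, t)` of the row `S` of an array of maps: the sum of `f` along the orbits
up to time `n t`, linearly interpolated and divided by `n`. -/
noncomputable def scaledSum (S : ℕ → C(X, X)) (f : C(X, ℝ)) (n : ℕ) (t : ℝ) : C(X, ℝ) :=
  (n : ℝ)⁻¹ • interpolatedSum (fun k => f.comp (seqComp S k)) (n * t)

/-- The path `t ↦ ζₙ(x, t)`. -/
noncomputable def scaledSumPath (S : ℕ → C(X, X)) (f : C(X, ℝ)) (n : ℕ) (x : X) : PathSpace :=
  pathOf fun t => scaledSum S f n t x

theorem norm_comp_le_nnnorm (f : C(X, ℝ)) (U : C(X, X)) : ‖f.comp U‖ ≤ ‖f‖₊ :=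
  (ContinuousMap.norm_le _ (norm_nonneg f)).2 fun _ => f.norm_coe_le_norm _

theorem lipschitzOnWith_scaledSum (S : ℕ → C(X, X)) (f : C(X, ℝ)) (n : ℕ) :
    LipschitzOnWith ‖f‖₊ (scaledSum S f n) (Ici 0) :=
  lipschitzOnWith_interpolatedMean (fun _ => norm_comp_le_nnnorm f _) n

theorem norm_scaledSum_sub_orbitSum_le (S : ℕ → C(X, X)) (f : C(X, ℝ)) (n : ℕ) (t : ℝ) :
    ‖scaledSum S f n t - (n : ℝ)⁻¹ • orbitSum S f 0 ⌊n * t⌋₊‖ ≤ (n : ℝ)⁻¹ * ‖f‖ := by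
  rw [scaledSum, orbitSum, Nat.Ico_zero_eq_range, ← smul_sub, norm_smul,
    Real.norm_of_nonneg (inv_nonneg.2 n.cast_nonneg)]
  gcongr
  exact norm_interpolatedSum_sub_sum_le (fun _ => norm_comp_le_nnnorm f _) _

theorem lipschitzWith_scaledSum_apply (S : ℕ → C(X, X)) (f : C(X, ℝ)) (n : ℕ) (x : X) :
    LipschitzWith ‖f‖₊ fun t : Icc (0 : ℝ) 1 => scaledSum S f n t x :=
  .of_dist_le_mul fun s t => (ContinuousMap.dist_apply_le_dist x).trans
    ((lipschitzOnWith_scaledSum S f n).dist_le_mul s s.2.1 t t.2.1)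

theorem continuous_scaledSumPath (S : ℕ → C(X, X)) (f : C(X, ℝ)) (n : ℕ) :
    Continuous (scaledSumPath S f n) :=
  continuous_uniformFun_of_continuous (G := fun t : Icc (0 : ℝ) 1 => scaledSum S f n t)
    ((lipschitzOnWith_scaledSum S f n).continuousOn.comp_continuous continuous_subtype_val
      fun t => t.2.1)

variable [MeasurableSpace X] [BorelSpace X] {m : Measure X}

theorem tendstoInMeasure_of_tendsto_l1Seminorm [IsFiniteMeasure m] {ι : Type*} {l : Filter ι}
    {g : ι → C(X, ℝ)} {g₀ : C(X, ℝ)} (h : Tendsto (fun i => l1Seminorm m (g i - g₀)) l (𝓝 0)) :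
    TendstoInMeasure m (fun i => g i) l g₀ := by
  have hLp : Tendsto (fun i => ContinuousMap.toLp 1 m ℝ (g i)) l
      (𝓝 (ContinuousMap.toLp 1 m ℝ g₀)) := by
    refine tendsto_iff_norm_sub_tendsto_zero.2 (h.congr fun i => ?_)
    rw [← map_sub]
    rfl
  exact (tendstoInMeasure_of_tendsto_Lp hLp).congr (fun i => ContinuousMap.coeFn_toLp m (g i))
    (ContinuousMap.coeFn_toLp m g₀)

variable [IsProbabilityMeasure m] {C : NNReal} {S : ℕ → ℕ → C(X, X)} {γ : ℝ → C(X, X)}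
  {f : C(X, ℝ)} {c : ℝ → ℝ}

namespace IsQuasistatic

theorem tendstoInMeasure_scaledSum (h : IsQuasistatic m C S γ f c) {t : ℝ} (ht : t ∈ Icc 0 1) :
    TendstoInMeasure m (fun n => scaledSum (S n) f n t) atTop fun _ => ∫ u in 0..t, c u := by
  have hbound (n : ℕ) : l1Seminorm m (scaledSum (S n) f n t - .const X (∫ u in 0..t, c u)) ≤
      (n : ℝ)⁻¹ * ‖f‖ + l1Seminorm m ((n : ℝ)⁻¹ • orbitSum (S n) f 0 ⌊n * t⌋₊ -
        .const X (∫ u in 0..t, c u)) := by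
    rw [← sub_add_sub_cancel (scaledSum (S n) f n t) ((n : ℝ)⁻¹ • orbitSum (S n) f 0 ⌊n * t⌋₊)]
    exact (map_add_le_add _ _ _).trans (add_le_add_left
      ((l1Seminorm_le_norm _).trans (norm_scaledSum_sub_orbitSum_le (S n) f n t)) _)
  have hlim : Tendsto (fun n : ℕ => (n : ℝ)⁻¹ * ‖f‖ + l1Seminorm m
      ((n : ℝ)⁻¹ • orbitSum (S n) f 0 ⌊n * t⌋₊ - .const X (∫ u in 0..t, c u))) atTop (𝓝 0) := by
    simpa using ((tendsto_inv_atTop_nhds_zero_nat (𝕜 := ℝ)).mul_const ‖f‖).add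
      (h.tendsto_l1Seminorm_orbitSum ht)
  exact tendstoInMeasure_of_tendsto_l1Seminorm (g₀ := .const X _)
    (squeeze_zero (fun _ => apply_nonneg _ _) hbound hlim)

theorem tendstoInMeasure_scaledSumPath (h : IsQuasistatic m C S γ f c) :
    TendstoInMeasure m (fun n => scaledSumPath (S n) f n) atTop
      fun _ => pathOf fun t => ∫ u in 0..t, c u := by
  have hpaths : UniformEquicontinuous fun (p : ℕ × X) (t : Icc (0 : ℝ) 1) =>
      scaledSum (S p.1) f p.1 t p.2 :=
    LipschitzWith.uniformEquicontinuous _ ‖f‖₊ fun p =>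
      lipschitzWith_scaledSum_apply (S p.1) f p.1 p.2
  have hlimit : Continuous fun t : Icc (0 : ℝ) 1 => ∫ u in 0..(t : ℝ), c u := by
    refine ((intervalIntegral.continuousOn_primitive_interval (a := 0) (b := 1) ?_).comp_continuous
      continuous_subtype_val fun t => by simpa only [uIcc_of_le zero_le_one] using t.2)
    simpa only [uIcc_of_le zero_le_one] using h.continuousOn_mean.integrableOn_Icc
  exact tendstoInMeasure_uniformFun_of_equicontinuous hpaths.equicontinuous
    (fun t _ hU => Eventually.mono (hlimit.tendsto t (UniformSpace.ball_mem_nhds _ hU))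
      fun _ hs _ => hs)
    fun t => h.tendstoInMeasure_scaledSum t.2

theorem tendsto_integral_comp_scaledSumPath (h : IsQuasistatic m C S γ f c) {μ : Measure X}
    [IsFiniteMeasure μ] (hμ : μ ≪ m) (F : BoundedContinuousFunction PathSpace ℝ) :
    Tendsto (fun n => ∫ x, F (scaledSumPath (S n) f n x) ∂μ) atTop
      (𝓝 (μ.real univ * F (pathOf fun t => ∫ u in 0..t, c u))) := by
  simpa using tendsto_integral_comp_of_tendstoInMeasure hμ h.tendstoInMeasure_scaledSumPath
    F.continuous
    (fun n => (F.continuous.comp (continuous_scaledSumPath _ f n)).aestronglyMeasurable)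
    fun _ _ => F.norm_coe_le_norm _

end IsQuasistatic

end MeanPath

section BoundedDistortion

theorem volume_compl_eq_zero_of_frequently_le {E : Set ℝ} (hE : MeasurableSet E) {c : ENNReal}
    (hc : c ≠ 0) (h : ∀ x, ∃ᶠ y in 𝓝[>] x, c * ENNReal.ofReal (y - x) ≤ volume (E ∩ Icc x y)) :
    volume Eᶜ = 0 := by
  filter_upwards [VitaliFamily.ae_tendsto_measure_inter_div_of_measurableSet
    (IsUnifLocDoublingMeasure.vitaliFamily (volume : Measure ℝ) 1) hE] with x hx
  by_contra hxE
  have hdensity := hx.comp (Real.tendsto_Icc_vitaliFamily_right x)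
  rw [indicator_of_notMem hxE] at hdensity
  obtain ⟨y, hle, hlt, hxy⟩ := ((h x).and_eventually
    ((hdensity.eventually_lt_const hc.bot_lt).and self_mem_nhdsWithin)).exists
  rw [Function.comp_apply, Real.volume_Icc, ENNReal.div_lt_iff (.inl (by simpa using hxy))
    (.inl ENNReal.ofReal_ne_top)] at hlt
  exact hlt.not_ge hle

/-- `G` is a differentiable map of the line with derivative at least `Λ`, and the variation of
`log G'` over an interval is at most `K` times the length of the *image* of the interval. Measuring
on the image side is what makes `K` independent of the number of factors of a composition. -/
structure HasBoundedDistortion (K Λ : ℝ) (G : ℝ → ℝ) : Prop where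
  differentiable : Differentiable ℝ G
  le_deriv : ∀ x, Λ ≤ deriv G x
  abs_log_deriv_sub_le : ∀ x y,
    |Real.log (deriv G x) - Real.log (deriv G y)| ≤ K * |G x - G y|

theorem mul_abs_sub_le_abs_sub {F : ℝ → ℝ} {Λ : ℝ} (hF : Differentiable ℝ F)
    (hΛ : ∀ x, Λ ≤ deriv F x) (x y : ℝ) : Λ * |x - y| ≤ |F x - F y| := by
  wlog hyx : y ≤ x generalizing x y
  · simpa only [abs_sub_comm] using this y x (le_of_not_ge hyx)
  rw [abs_of_nonneg (sub_nonneg.2 hyx)]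
  exact (mul_sub_le_image_sub_of_le_deriv hF hΛ hyx).trans (le_abs_self _)

namespace HasBoundedDistortion

variable {K Λ : ℝ} {G : ℝ → ℝ} {x x' u : ℝ}

theorem id (hK : 0 ≤ K) : HasBoundedDistortion K 1 id where
  differentiable := differentiable_id
  le_deriv x := (deriv_id x).ge
  abs_log_deriv_sub_le x y := by
    simpa only [deriv_id, sub_self, abs_zero] using mul_nonneg hK (abs_nonneg _)

theorem comp {F : ℝ → ℝ} {lam : ℝ} (hlam : 0 < lam) (hF : Differentiable ℝ F)
    (hlamF : ∀ x, lam ≤ deriv F x)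
    (hlog : ∀ x y, |Real.log (deriv F x) - Real.log (deriv F y)| ≤ K * (lam - 1) * |x - y|)
    (hK : 0 ≤ K) (hΛ : 0 < Λ) (hG : HasBoundedDistortion K Λ G) :
    HasBoundedDistortion K (lam * Λ) (F ∘ G) := by
  have hFpos (x : ℝ) : 0 < deriv F x := hlam.trans_le (hlamF x)
  have hGpos (x : ℝ) : 0 < deriv G x := hΛ.trans_le (hG.le_deriv x)
  have hderiv (x : ℝ) : deriv (F ∘ G) x = deriv F (G x) * deriv G x :=
    deriv_comp x (hF _) (hG.differentiable x)
  refine ⟨hF.comp hG.differentiable, fun x => ?_, fun x y => ?_⟩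
  · rw [hderiv]
    exact mul_le_mul (hlamF _) (hG.le_deriv x) hΛ.le (hFpos _).le
  · rw [hderiv, hderiv, Real.log_mul (hFpos _).ne' (hGpos _).ne',
      Real.log_mul (hFpos _).ne' (hGpos _).ne', add_sub_add_comm]
    calc _ ≤ K * (lam - 1) * |G x - G y| + K * |G x - G y| :=
          (abs_add_le _ _).trans (add_le_add (hlog _ _) (hG.abs_log_deriv_sub_le x y))
      _ = K * (lam * |G x - G y|) := by ring
      _ ≤ K * |F (G x) - F (G y)| := by
          gcongr
          exact mul_abs_sub_le_abs_sub hF hlamF _ _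

variable (h : HasBoundedDistortion K Λ G) (hΛ : 0 < Λ)
include h hΛ

theorem deriv_pos (x : ℝ) : 0 < deriv G x :=
  hΛ.trans_le (h.le_deriv x)

theorem strictMono : StrictMono G :=
  strictMono_of_deriv_pos (h.deriv_pos hΛ)

theorem exists_eq_add_one (x : ℝ) : ∃ x' > x, G x' = G x + 1 ∧ Λ * (x' - x) ≤ 1 := by
  have hgrowth {y : ℝ} (hxy : x ≤ y) := mul_sub_le_image_sub_of_le_deriv h.differentiable
    h.le_deriv hxy
  have hle : x ≤ x + Λ⁻¹ := le_add_of_nonneg_right (inv_nonneg.2 hΛ.le)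
  have hmem : G x + 1 ∈ Icc (G x) (G (x + Λ⁻¹)) := by
    have hunit := hgrowth hle
    rw [add_sub_cancel_left, mul_inv_cancel₀ hΛ.ne'] at hunit
    exact ⟨by linarith, by linarith⟩
  obtain ⟨x', hx', hGx'⟩ := intermediate_value_Icc hle h.differentiable.continuous.continuousOn hmem
  exact ⟨x', (h.strictMono hΛ).lt_iff_lt.1 (by linarith), hGx', by linarith [hgrowth hx'.1]⟩

theorem deriv_le_exp_mul_deriv {u v : ℝ} (huv : |G u - G v| ≤ 1) :
    deriv G u ≤ Real.exp K * deriv G v := by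
  have hK : 0 ≤ K := by
    have hpos : 0 < |G 1 - G 0| := abs_pos.2 (sub_ne_zero.2 (h.strictMono hΛ one_pos).ne')
    exact nonneg_of_mul_nonneg_left ((abs_nonneg _).trans (h.abs_log_deriv_sub_le 1 0)) hpos
  have hlog : Real.log (deriv G u) - Real.log (deriv G v) ≤ K :=
    (le_of_abs_le (h.abs_log_deriv_sub_le u v)).trans (mul_le_of_le_one_right hK huv)
  rw [← Real.exp_log (h.deriv_pos hΛ u), ← Real.exp_log (h.deriv_pos hΛ v), ← Real.exp_add]
  exact Real.exp_le_exp.2 (by linarith)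

/-- The mean value theorem gives a point of `(x, x')` where the derivative is `1 / (x' - x)`. -/
theorem deriv_mul_sub_mem_Icc (hx' : G x' = G x + 1) (hu : u ∈ Icc x x') :
    deriv G u * (x' - x) ∈ Icc (Real.exp K)⁻¹ (Real.exp K) := by
  have hmono := (h.strictMono hΛ).monotone
  have hxx' : x < x' := (h.strictMono hΛ).lt_iff_lt.1 (by linarith)
  obtain ⟨v, hv, hv'⟩ := exists_deriv_eq_slope G hxx' h.differentiable.continuous.continuousOn
    h.differentiable.differentiableOn
  rw [hx', add_sub_cancel_left, eq_div_iff (sub_pos.2 hxx').ne'] at hv'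
  have hclose : |G u - G v| ≤ 1 :=
    abs_sub_le_iff.2 ⟨by linarith [hmono hu.2, hmono hv.1.le],
      by linarith [hmono hu.1, hmono hv.2.le]⟩
  constructor
  · rw [inv_le_iff_one_le_mul₀' (Real.exp_pos K), ← mul_assoc, ← hv']
    gcongr
    exact h.deriv_le_exp_mul_deriv hΛ (abs_sub_comm (G u) _ ▸ hclose)
  · rw [← mul_one (Real.exp K), ← hv', ← mul_assoc]
    gcongr
    exact h.deriv_le_exp_mul_deriv hΛ hclose

theorem volume_eq_lintegral_deriv (hx' : G x' = G x + 1) {E : Set Circle1} (hE : MeasurableSet E) :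
    volume E = ∫⁻ u in Ioc x x' ∩ {u | (G u : Circle1) ∈ E}, ENNReal.ofReal (deriv G u) := by
  have hmono := h.strictMono hΛ
  have hcont := h.differentiable.continuous
  have himage : G '' (Ioc x x' ∩ {u | (G u : Circle1) ∈ E}) =
      QuotientAddGroup.mk ⁻¹' E ∩ Ioc (G x) (G x + 1) := by
    have hIoc : G '' Ioc x x' = Ioc (G x) (G x + 1) := by
      have hxx' : x ≤ x' := hmono.le_iff_le.1 (by linarith)
      rw [hcont.continuousOn.image_Ioc_of_strictMonoOn hxx' (hmono.strictMonoOn _), hx']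
    rw [← hIoc, inter_comm]
    exact image_preimage_inter G (Ioc x x') (QuotientAddGroup.mk ⁻¹' E)
  have hmeas : MeasurableSet (Ioc x x' ∩ {u | (G u : Circle1) ∈ E}) :=
    measurableSet_Ioc.inter (((AddCircle.continuous_mk' 1).comp hcont).measurable hE)
  have hchange := lintegral_image_eq_lintegral_abs_deriv_mul hmeas
    (fun u _ => (h.differentiable u).hasDerivAt.hasDerivWithinAt) hmono.injective.injOn fun _ => 1
  rw [himage, setLIntegral_one, ← AddCircle.add_projection_respects_measure 1 _ hE] at hchange
  simpa only [mul_one, abs_of_pos (h.deriv_pos hΛ _)] using hchange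

theorem volume_preimage_le (hx' : G x' = G x + 1) {E : Set Circle1} (hE : MeasurableSet E) :
    volume (Ioc x x' ∩ {u | (G u : Circle1) ∈ E}) ≤
      ENNReal.ofReal (Real.exp K * (x' - x)) * volume E := by
  rw [h.volume_eq_lintegral_deriv hΛ hx' hE, ← lintegral_const_mul' _ _ ENNReal.ofReal_ne_top,
    ← setLIntegral_one]
  refine setLIntegral_mono (by fun_prop) fun u hu => ?_
  have hlower := (h.deriv_mul_sub_mem_Icc hΛ hx' (Ioc_subset_Icc_self hu.1)).1
  rw [inv_le_iff_one_le_mul₀' (Real.exp_pos K)] at hlower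
  rw [← ENNReal.ofReal_mul' (h.deriv_pos hΛ u).le, ENNReal.one_le_ofReal]
  linarith

theorem mul_volume_le_volume_preimage (hx' : G x' = G x + 1) {E : Set Circle1}
    (hE : MeasurableSet E) : ENNReal.ofReal (x' - x) * volume E ≤
      ENNReal.ofReal (Real.exp K) * volume (Ioc x x' ∩ {u | (G u : Circle1) ∈ E}) := by
  rw [h.volume_eq_lintegral_deriv hΛ hx' hE, ← lintegral_const_mul' _ _ ENNReal.ofReal_ne_top,
    ← setLIntegral_const]
  refine setLIntegral_mono (by fun_prop) fun u hu => ?_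
  rw [← ENNReal.ofReal_mul' (h.deriv_pos hΛ u).le, mul_comm]
  exact ENNReal.ofReal_le_ofReal
    (h.deriv_mul_sub_mem_Icc hΛ hx' (Ioc_subset_Icc_self hu.1)).2

theorem volume_preimage_le_of_eq_add_natCast {E : Set Circle1} (hE : MeasurableSet E) (n : ℕ)
    (hx' : G x' = G x + n) : volume (Ioc x x' ∩ {u | (G u : Circle1) ∈ E}) ≤
      ENNReal.ofReal (Real.exp K * (x' - x)) * volume E := by
  induction n generalizing x with
  | zero =>
    have hxx' : x' = x := (h.strictMono hΛ).injective (by simpa using hx')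
    simp [hxx']
  | succ n ih =>
    obtain ⟨y, hxy, hy, -⟩ := h.exists_eq_add_one hΛ x
    have hyx' : G x' = G y + n := by rw [hx', hy]; push_cast; ring
    have hle : y ≤ x' := (h.strictMono hΛ).le_iff_le.1 (by linarith [n.cast_nonneg (α := ℝ)])
    calc _ ≤ volume (Ioc x y ∩ {u | (G u : Circle1) ∈ E}) +
          volume (Ioc y x' ∩ {u | (G u : Circle1) ∈ E}) := by
          rw [← Ioc_union_Ioc_eq_Ioc hxy.le hle, union_inter_distrib_right]
          exact measure_union_le _ _
      _ ≤ ENNReal.ofReal (Real.exp K * (y - x)) * volume E +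
          ENNReal.ofReal (Real.exp K * (x' - y)) * volume E :=
          add_le_add (h.volume_preimage_le hΛ hy hE) (ih hyx')
      _ = ENNReal.ofReal (Real.exp K * (x' - x)) * volume E := by
          rw [← add_mul, ← ENNReal.ofReal_add, ← mul_add, add_comm, sub_add_sub_cancel]
          · exact mul_nonneg (Real.exp_pos K).le (sub_nonneg.2 hxy.le)
          · exact mul_nonneg (Real.exp_pos K).le (sub_nonneg.2 hle)

theorem map_volume_le {U : C(Circle1, Circle1)} (hU : ∀ x : ℝ, U x = (G x : Circle1)) :
    (volume : Measure Circle1).map U ≤ (Real.exp K).toNNReal • volume := by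
  obtain ⟨n, hn⟩ : ∃ n : ℕ, G 1 = G 0 + n := by
    have hU01 : ((G 1 - G 0 : ℝ) : Circle1) = 0 := by
      rw [AddCircle.coe_sub, ← hU, ← hU, sub_eq_zero]
      exact congrArg U ((AddCircle.coe_period 1).trans (QuotientAddGroup.mk_zero _).symm)
    obtain ⟨d, hd⟩ := (AddCircle.coe_eq_zero_iff 1).1 hU01
    rw [zsmul_one] at hd
    have hd_nonneg : 0 ≤ d := by
      have := (h.strictMono hΛ).monotone zero_le_one
      exact_mod_cast hd ▸ sub_nonneg.2 this
    lift d to ℕ using hd_nonneg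
    exact ⟨d, by rw [Int.cast_natCast] at hd; linarith⟩
  refine Measure.le_iff.2 fun E hE => ?_
  have hpreimage : QuotientAddGroup.mk ⁻¹' (U ⁻¹' E) = {u : ℝ | (G u : Circle1) ∈ E} := by
    ext u
    exact iff_of_eq (congrArg (· ∈ E) (hU u))
  rw [Measure.map_apply U.continuous.measurable hE, AddCircle.add_projection_respects_measure 1 0
    (U.continuous.measurable hE), zero_add, inter_comm, hpreimage]
  refine (h.volume_preimage_le_of_eq_add_natCast hΛ hE n hn).trans_eq ?_
  rw [sub_zero, mul_one]
  rfl

end HasBoundedDistortion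

theorem volume_compl_eq_zero_of_forall_preimage_eq {K : ℝ} {Λ : ℕ → ℝ} {G : ℕ → ℝ → ℝ}
    (hG : ∀ k, HasBoundedDistortion K (Λ k) (G k)) (hΛ : ∀ k, 0 < Λ k)
    (hΛ_tendsto : Tendsto Λ atTop atTop) {E : Set Circle1} (hE : MeasurableSet E)
    (hE0 : volume E ≠ 0) {P : Set ℝ} (hP : ∀ k, {u : ℝ | (G k u : Circle1) ∈ E} = P) :
    volume Pᶜ = 0 := by
  have hPmeas : MeasurableSet P :=
    hP 0 ▸ ((AddCircle.continuous_mk' 1).comp (hG 0).differentiable.continuous).measurable hE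
  refine volume_compl_eq_zero_of_frequently_le hPmeas
    (ENNReal.div_ne_zero.2 ⟨hE0, ENNReal.ofReal_ne_top (r := Real.exp K)⟩) fun x => ?_
  choose x' hxx' hx' hlen using fun k => (hG k).exists_eq_add_one (hΛ k) x
  have hx'_tendsto : Tendsto x' atTop (𝓝[>] x) := by
    refine tendsto_nhdsWithin_iff.2 ⟨?_, .of_forall hxx'⟩
    have hupper : Tendsto (fun k => x + (Λ k)⁻¹) atTop (𝓝 x) := by
      simpa only [add_zero, Pi.inv_apply] using hΛ_tendsto.inv_tendsto_atTop.const_add x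
    refine tendsto_of_tendsto_of_tendsto_of_le_of_le tendsto_const_nhds hupper
      (fun k => (hxx' k).le) fun k => ?_
    have hle := (le_inv_mul_iff₀ (hΛ k)).2 (hlen k)
    linarith
  refine hx'_tendsto.frequently (Frequently.of_forall fun k => ?_)
  rw [mul_comm, ← mul_div_assoc, mul_comm, ← hP k]
  refine ENNReal.div_le_of_le_mul' ?_
  rw [mul_comm]
  refine ((hG k).mul_volume_le_volume_preimage (hΛ k) (hx' k) hE).trans ?_
  rw [inter_comm]
  gcongr
  exact Ioc_subset_Icc_self

end BoundedDistortion

section ExpandingMaps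

instance : IsProbabilityMeasure (volume : Measure Circle1) :=
  ⟨by simp only [AddCircle.measure_univ, ENNReal.ofReal_one]⟩

variable {lam Astar : ℝ}

namespace CM

theorem toMap_coe (T : CM lam Astar) (x : ℝ) : T.toMap x = (T.F x : Circle1) := by
  have hper : Function.Periodic (fun x => (T.F x : Circle1)) 1 := fun x => by
    have hdeg : ((T.deg : ℝ) : Circle1) = 0 := (AddCircle.coe_eq_zero_iff 1).2 ⟨T.deg, by simp⟩
    simp only [T.lift_add_one, AddCircle.coe_add, hdeg, add_zero]
  rw [toMap, AddCircle.coe_equivIco_mk_apply, div_one, mul_one, Int.fract]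
  simpa only [mul_one] using hper.sub_int_mul_eq ⌊x⌋

/-- The circle map of `T`, bundled as a continuous map. -/
noncomputable def toContinuousMap (T : CM lam Astar) : C(Circle1, Circle1) where
  toFun := T.toMap
  continuous_toFun := (QuotientAddGroup.isQuotientMap_mk _).continuous_iff.2 <|
    ((AddCircle.continuous_mk' 1).comp T.contDiff.continuous).congr fun x => (T.toMap_coe x).symm

theorem seqComp_coe (Ts : ℕ → CM lam Astar) (k : ℕ) (x : ℝ) :
    seqComp (fun i => (Ts i).toContinuousMap) k x = (liftIter Ts k x : Circle1) := by
  induction k with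
  | zero => rfl
  | succ k ih => exact (congrArg (Ts (k + 1)).toMap ih).trans ((Ts (k + 1)).toMap_coe _)

theorem abs_log_deriv_sub_le (hlam : 0 < lam) (T : CM lam Astar) (x y : ℝ) :
    |Real.log (deriv T.F x) - Real.log (deriv T.F y)| ≤ Astar / lam * |x - y| := by
  have hpos (u : ℝ) : 0 < deriv T.F u := hlam.trans_le (T.expanding u)
  have hdiff : Differentiable ℝ (deriv T.F) :=
    ((contDiff_succ_iff_deriv (n := 1)).1 T.contDiff).2.2.differentiable one_ne_zero
  refine Convex.norm_image_sub_le_of_norm_deriv_le (s := univ)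
    (fun u _ => (hdiff u).log (hpos u).ne') (fun u _ => ?_) convex_univ (mem_univ y) (mem_univ x)
  rw [deriv.log (hdiff u) (hpos u).ne', norm_div, Real.norm_of_nonneg (hpos u).le]
  exact div_le_div₀ ((abs_nonneg _).trans (T.second_bound u)) (T.second_bound u) hlam
    (T.expanding u)

/-- The distortion constant of compositions of maps of the class `CM lam Astar`: the `K` with
`K * (lam - 1) = Astar / lam`. -/
noncomputable def distortionConst (lam Astar : ℝ) : ℝ := Astar / (lam * (lam - 1))

variable (hlam : 1 < lam) (Ts : ℕ → CM lam Astar)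
include hlam

theorem hasBoundedDistortion_liftIter (k : ℕ) :
    HasBoundedDistortion (distortionConst lam Astar) (lam ^ k) (liftIter Ts k) := by
  have hlam0 : 0 < lam := one_pos.trans hlam
  have hK : 0 ≤ distortionConst lam Astar :=
    div_nonneg ((abs_nonneg _).trans ((Ts 0).second_bound 0))
      (mul_nonneg hlam0.le (sub_nonneg.2 hlam.le))
  have hK_mul : distortionConst lam Astar * (lam - 1) = Astar / lam := by
    rw [distortionConst, ← div_div, div_mul_cancel₀ _ (sub_pos.2 hlam).ne']
  induction k with
  | zero => exact pow_zero lam ▸ .id hK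
  | succ k ih =>
    rw [pow_succ']
    exact ih.comp hlam0 ((Ts (k + 1)).contDiff.differentiable two_ne_zero) (Ts (k + 1)).expanding
      (hK_mul ▸ (Ts (k + 1)).abs_log_deriv_sub_le hlam0) hK (pow_pos hlam0 k)

theorem hasBoundedPushforwards : HasBoundedPushforwards volume
    (Real.exp (distortionConst lam Astar)).toNNReal fun k => (Ts k).toContinuousMap := fun k =>
  (hasBoundedDistortion_liftIter hlam Ts k).map_volume_le (pow_pos (one_pos.trans hlam) k)
    (seqComp_coe Ts k)

theorem preErgodic (T : CM lam Astar) : PreErgodic T.toMap volume where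
  aeconst_set E hE hinv := by
    rw [eventuallyConst_set', or_iff_not_imp_left, ae_eq_empty, ae_eq_univ]
    intro hE0
    have hpreimage (k : ℕ) :
        {u : ℝ | (liftIter (fun _ => T) k u : Circle1) ∈ E} = QuotientAddGroup.mk ⁻¹' E := by
      ext u
      rw [mem_ofPred_eq, ← seqComp_coe, coe_seqComp_const]
      exact Set.ext_iff.1 (Function.IsFixedPt.preimage_iterate hinv k) u
    have hzero : volume (QuotientAddGroup.mk ⁻¹' E : Set ℝ)ᶜ = 0 :=
      volume_compl_eq_zero_of_forall_preimage_eq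
        (hasBoundedDistortion_liftIter hlam fun _ => T) (fun k => pow_pos (one_pos.trans hlam) k)
        (tendsto_pow_atTop_atTop_of_one_lt hlam) hE hE0 hpreimage
    rw [AddCircle.add_projection_respects_measure 1 0 hE.compl]
    exact measure_mono_null inter_subset_left hzero

end CM

namespace IsSRBDensity

variable {T : CM lam Astar} {ρ : Circle1 → ℝ} (h : IsSRBDensity T ρ)
include h

theorem isProbabilityMeasure :
    IsProbabilityMeasure ((volume : Measure Circle1).withDensity fun x => ENNReal.ofReal (ρ x)) :=
  ⟨by
    rw [withDensity_apply _ .univ, Measure.restrict_univ, ← ofReal_integral_eq_lintegral_ofReal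
      h.1.1 (.of_forall h.1.2.2), h.1.2.1, ENNReal.ofReal_one]⟩

theorem volume_absolutelyContinuous :
    (volume : Measure Circle1) ≪ volume.withDensity fun x => ENNReal.ofReal (ρ x) := by
  refine withDensity_absolutelyContinuous' h.1.1.aestronglyMeasurable.aemeasurable.ennreal_ofReal ?_
  filter_upwards [h.2.1] with x hx
  exact (ENNReal.ofReal_pos.2 hx).ne'

theorem integral_withDensity (f : Circle1 → ℝ) :
    ∫ x, f x ∂(volume : Measure Circle1).withDensity (fun x => ENNReal.ofReal (ρ x)) =
      ∫ x, f x * ρ x := by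
  rw [integral_withDensity_eq_integral_toReal_smul₀
    h.1.1.aestronglyMeasurable.aemeasurable.ennreal_ofReal (.of_forall fun _ =>
      ENNReal.ofReal_lt_top)]
  simp only [ENNReal.toReal_ofReal (h.1.2.2 _), smul_eq_mul, mul_comm]

theorem ergodic (hlam : 1 < lam) :
    Ergodic T.toMap ((volume : Measure Circle1).withDensity fun x => ENNReal.ofReal (ρ x)) where
  measurable := T.toContinuousMap.continuous.measurable
  map_eq := h.2.2
  aeconst_set _ hE hinv := ((CM.preErgodic hlam T).aeconst_set hE hinv).anti
    (withDensity_absolutelyContinuous _ _).ae_le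

theorem hasErgodicMean (hlam : 1 < lam) (f : C(Circle1, ℝ)) :
    HasErgodicMean volume T.toMap f (∫ x, f x * ρ x) := by
  have := h.isProbabilityMeasure
  have hbirkhoff := tendstoInMeasure_birkhoffAverage_of_ergodic (h.ergodic hlam)
    (f.continuous.memLp_of_hasCompactSupport (.of_compactSpace f))
  rw [h.integral_withDensity] at hbirkhoff
  have hbound (n : ℕ) (x : Circle1) :
      |(|birkhoffAverage ℝ T.toMap f n x - ∫ y, f y * ρ y|)| ≤ ‖f‖ + |∫ y, f y * ρ y| := by
    rw [abs_abs]
    exact (abs_sub _ _).trans (add_le_add_left (norm_birkhoffAverage_le f.norm_coe_le_norm n x) _)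
  simpa [HasErgodicMean] using tendsto_integral_comp_of_tendstoInMeasure
    h.volume_absolutelyContinuous hbirkhoff (F := fun y => |y - ∫ x, f x * ρ x|) (by fun_prop)
    (fun n => ((continuous_birkhoffAverage T.toContinuousMap.continuous f.continuous n).sub
      continuous_const).abs.aestronglyMeasurable) hbound

end IsSRBDensity

end ExpandingMaps

section QuasistaticCircleMaps

variable {lam Astar η : ℝ} {γ : ℝ → CM lam Astar} {Tarr : ℕ → ℕ → CM lam Astar}

theorem arrIter_eq_seqComp (Tarr : ℕ → ℕ → CM lam Astar) (n k : ℕ) :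
    arrIter Tarr n k = seqComp (fun i => (Tarr n i).toContinuousMap) k := by
  induction k with
  | zero => rfl
  | succ k ih => rw [arrIter, ih]; rfl

theorem pathOf_zetaP (Tarr : ℕ → ℕ → CM lam Astar) (f : C(Circle1, ℝ)) (n : ℕ) (x : Circle1) :
    pathOf (zetaP Tarr f n x) = scaledSumPath (fun i => (Tarr n i).toContinuousMap) f n x := by
  refine congrArg pathOf (funext fun t => ?_)
  simp [zetaP, fnk, arrIter_eq_seqComp, scaledSum, interpolatedSum, mul_add]

theorem CM.dist_toContinuousMap_le_dC1 (T₁ T₂ : CM lam Astar) :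
    dist T₁.toContinuousMap T₂.toContinuousMap ≤ dC1 T₁ T₂ := by
  refine ContinuousMap.dist_le_iff_of_nonempty.2 fun x => ?_
  have hbdd : BddAbove (range fun x => dist (T₁.toMap x) (T₂.toMap x)) :=
    (isCompact_range (T₁.toContinuousMap.continuous.dist T₂.toContinuousMap.continuous)).bddAbove
  exact (le_ciSup hbdd x).trans
    (le_add_of_nonneg_right (Real.iSup_nonneg fun _ => abs_nonneg _))

theorem HolderCurve.continuousOn_toContinuousMap (hη : 0 < η) (hγ : HolderCurve η γ) :
    ContinuousOn (fun t => (γ t).toContinuousMap) (Icc 0 1) := by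
  obtain ⟨H, hH⟩ := hγ
  intro t ht
  have hmodulus : Continuous fun s => H * |s - t| ^ η :=
    continuous_const.mul ((continuous_id.sub continuous_const).abs.rpow_const fun _ => .inr hη.le)
  refine tendsto_iff_dist_tendsto_zero.2 (squeeze_zero' (g := fun s => H * |s - t| ^ η)
    (.of_forall fun _ => dist_nonneg) ?_ (tendsto_nhdsWithin_of_tendsto_nhds ?_))
  · filter_upwards [self_mem_nhdsWithin] with s hs
    exact (CM.dist_toContinuousMap_le_dC1 _ _).trans (hH s hs t ht)
  · simpa [hη.ne'] using hmodulus.tendsto t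

theorem ArrayApprox.tendstoUniformlyOn_toContinuousMap (hη : 0 < η) (hT : ArrayApprox η γ Tarr) :
    TendstoUniformlyOn (fun (n : ℕ) (t : ℝ) => (Tarr n ⌊n * t⌋₊).toContinuousMap)
      (fun t => (γ t).toContinuousMap) atTop (Icc 0 1) := by
  obtain ⟨M, hM⟩ := hT
  have hrate : Tendsto (fun n : ℕ => M * ((n : ℝ) ^ η)⁻¹) atTop (𝓝 0) := by
    have hpow := (tendsto_rpow_atTop hη).comp (tendsto_natCast_atTop_atTop (R := ℝ))
    simpa using hpow.inv_tendsto_atTop.const_mul M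
  refine Metric.tendstoUniformlyOn_iff.2 fun ε hε => ?_
  filter_upwards [hrate.eventually_lt_const hε, eventually_gt_atTop 0] with n hn hn0 t ht
  have hpos : (0 : ℝ) < (n : ℝ) ^ η := Real.rpow_pos_of_pos (Nat.cast_pos.2 hn0) η
  rw [dist_comm]
  exact ((CM.dist_toContinuousMap_le_dC1 _ _).trans
    ((le_mul_inv_iff₀' hpos).2 (hM n hn0 t ht))).trans_lt hn

theorem isQuasistatic_of_isSRBDensity (hlam : 1 < lam)
    (hγ : ContinuousOn (fun t => (γ t).toContinuousMap) (Icc 0 1))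
    (hT : TendstoUniformlyOn (fun (n : ℕ) (t : ℝ) => (Tarr n ⌊n * t⌋₊).toContinuousMap)
      (fun t => (γ t).toContinuousMap) atTop (Icc 0 1))
    (f : C(Circle1, ℝ)) {ρhat : ℝ → Circle1 → ℝ}
    (hρhat : ∀ t ∈ Icc (0 : ℝ) 1, IsSRBDensity (γ t) (ρhat t)) :
    IsQuasistatic volume (Real.exp (CM.distortionConst lam Astar)).toNNReal
      (fun n k => (Tarr n k).toContinuousMap) (fun t => (γ t).toContinuousMap) f
      fun t => ∫ y, f y * ρhat t y where
  continuousOn_curve := hγ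
  tendstoUniformlyOn := hT
  bounded_array n := CM.hasBoundedPushforwards hlam (Tarr n)
  bounded_curve t _ := CM.hasBoundedPushforwards hlam fun _ => γ t
  hasErgodicMean t ht := (hρhat t ht).hasErgodicMean hlam f

theorem statement16_general (hlam : 1 < lam)
    (hγ : ContinuousOn (fun t => (γ t).toContinuousMap) (Icc 0 1))
    (hT : TendstoUniformlyOn (fun (n : ℕ) (t : ℝ) => (Tarr n ⌊n * t⌋₊).toContinuousMap)
      (fun t => (γ t).toContinuousMap) atTop (Icc 0 1))
    {f : Circle1 → ℝ} (hf : Continuous f) {ρhat : ℝ → Circle1 → ℝ}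
    (hρhat : ∀ t ∈ Icc (0 : ℝ) 1, IsSRBDensity (γ t) (ρhat t))
    {μ : Measure Circle1} (hμ : IsProbabilityMeasure μ) (hac : μ ≪ volume) :
    ContinuousOn (fun t => ∫ y, f y * ρhat t y) (Icc 0 1) ∧
    ∀ F : BoundedContinuousFunction PathSpace ℝ,
      Tendsto (fun n : ℕ => ∫ x, F (pathOf (zetaP Tarr f n x)) ∂μ) atTop
        (𝓝 (F (pathOf fun t => ∫ s in (0 : ℝ)..t, ∫ y, f y * ρhat s y))) := by
  have hquasistatic := isQuasistatic_of_isSRBDensity hlam hγ hT ⟨f, hf⟩ hρhat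
  refine ⟨hquasistatic.continuousOn_mean, fun F => ?_⟩
  have hlim := hquasistatic.tendsto_integral_comp_scaledSumPath hac F
  simp only [← pathOf_zetaP, probReal_univ, one_mul] at hlim
  exact hlim

end QuasistaticCircleMaps

/-- Theorem `thm:mean`.  If `f` is Lipschitz and `μ` is an arbitrary
absolutely continuous probability measure, then `t ↦ μ̂ₜ(f)` is continuous on `[0,1]` and the
laws of the paths `t ↦ ζₙ(x,t)` converge weakly on `C⁰([0,1],ℝ)` to the point mass at
`ζ(t) = ∫₀ᵗ μ̂ₛ(f) ds`; in particular the limit is independent of `μ`. -/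
theorem statement16 {lam Astar : ℝ} (hlam : 1 < lam) (hA : 0 < Astar)
    {η : ℝ} (hη : η ∈ Set.Ioo (0 : ℝ) 1)
    (γ : ℝ → CM lam Astar) (hγ : HolderCurve η γ)
    (Tarr : ℕ → ℕ → CM lam Astar) (hT : ArrayApprox η γ Tarr)
    (f : Circle1 → ℝ) (hf : ∃ K : NNReal, LipschitzWith K f)
    (ρhat : ℝ → Circle1 → ℝ) (hρhat : ∀ t ∈ Set.Icc (0 : ℝ) 1, IsSRBDensity (γ t) (ρhat t))
    (μ : Measure Circle1) (hμ : IsProbabilityMeasure μ) (hac : μ ≪ volume) :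
    ContinuousOn (fun t => ∫ y : Circle1, f y * ρhat t y) (Set.Icc (0 : ℝ) 1) ∧
    ∀ F : BoundedContinuousFunction PathSpace ℝ,
      Tendsto (fun n : ℕ => ∫ x : Circle1, F (pathOf (zetaP Tarr f n x)) ∂μ)
        atTop
        (𝓝 (F (pathOf (fun t => ∫ s in (0:ℝ)..t, ∫ y : Circle1, f y * ρhat s y)))) := by
  obtain ⟨_, hK⟩ := hf
  exact statement16_general hlam (hγ.continuousOn_toContinuousMap hη.1)
    (hT.tendstoUniformlyOn_toContinuousMap hη.1) hK.continuous hρhat hμ hac
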